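/- Let F be a totally real number field with [F:ℚ] ≥ 2 and ring of integers 𝓞_F, and let Γ be a finite-index subgroup of SL₂(𝓞_F). Then the abelianization of Γ is finite; in particular every group homomorphism from Γ to ℚ is trivial (equivalently, the first group cohomology H¹(Γ, ℚ) with trivial Γ-action vanishes). -/

import Mathlib

open NumberField Matrix

/-!
Dirichlet's theorem provides a unit `u` of infinite order in `𝓞 F`. It suffices that `SL₂(𝓞 F)` is
finitely generated and that the abelianization of `Γ` is a torsion group: `Γ` is then finitely
generated as well, a finitely generated commutative torsion group is finite, and a homomorphism to
`ℚ` kills torsion.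

*Torsion.* Unipotent matrices whose entries are divisible enough lie in `Γ`, and conjugating them by
a power of (a conjugate of) `diag (u, u⁻¹)` multiplies the entry by some `u ^ (2 m) ≠ 1`, so they
have finite order in the abelianization. Every element of `SL₂(𝓞 F)` has a power in the group
`levelSubgroup q` of matrices with off-diagonal entries in `(q)` and diagonal entries in
`1 + (q ^ 2)`. So it remains to see that this group is torsion modulo the normal closure of its
elementary matrices. This is a weak form of the congruence subgroup property of `SL₂` over rings
with infinitely many units, and the argument is in the spirit of Mennicke, Vaserstein and Serre.

The value of a homomorphism that kills the elementary matrices depends only on the first row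
`(a, b)`: it is the symbol of the row. It does not change when a multiple of `q a` is added to `b`,
or a multiple of `q b` to `a`, or when `a` is multiplied by the square of a unit that is `1` modulo
`q ^ 2`. Every invertible residue class contains elements `t` for which `𝓞 F ⧸ (t)` is cyclic, and
modulo powers of such a `t` the squares of units are as dense as possible. Together with Dirichlet's
theorem on primes in progressions this produces an exponent `E`, depending on `t` but not on the
row, such that `(a, t ^ E * b)` and `(a, b)` have the same symbol whenever `a ≡ 1 + t` modulo
`t ^ 2`: the row `(a, t ^ i * b)` has the symbol of a row whose first entry is a rational prime `l`,
and `t` has finite order modulo `l`. Hence conjugation by an element with upper left entry `t`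
preserves the homomorphism, whose image is therefore commutative. When the target is torsion-free,
moving the first entry to a prime `l ≡ 1` modulo `4`, so that `-1` is a square modulo `l`, and
computing the square of the matrix shows that the homomorphism is trivial.

*Finite generation.* Up to multiplying the dividend by one of finitely many integers, `𝓞 F` has a
Euclidean division with respect to the norm. Hence any two vectors in a suitable set meeting every
line of `F ^ 2` are joined by a chain of vectors with bounded consecutive determinants. The elements
of `SL₂(𝓞 F)` realizing the links of such chains lie in finitely many double cosets of line
stabilizers, and the stabilizer of a line is finitely generated, being an extension of a group of
units by a subgroup of `𝓞 F`.
-/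

namespace HilbertModular

section CommRing

variable {R : Type*} [CommRing R]

theorem isCoprime_of_dvd_sub {a a' b : R} (h : IsCoprime a b) (hd : b ∣ a' - a) :
    IsCoprime a' b := by
  obtain ⟨w, hw⟩ := hd
  rw [← add_sub_cancel a a', hw]
  exact h.add_mul_left_left w

theorem exists_dvd_sub_and_dvd_sub {a b : R} (h : IsCoprime a b) (x y : R) :
    ∃ z, a ∣ z - x ∧ b ∣ z - y := by
  obtain ⟨u, v, huv⟩ := h
  refine ⟨x * (v * b) + y * (u * a), ⟨u * (y - x), ?_⟩, ⟨v * (x - y), ?_⟩⟩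
  · linear_combination x * huv
  · linear_combination y * huv

theorem exists_dvd_pow_mul_one_sub_pow [Ring.HasFiniteQuotients R] (x : R) {d : R} (hd : d ≠ 0) :
    ∃ i m : ℕ, d ∣ x ^ i * (1 - x ^ (m + 1)) := by
  have : Finite (R ⧸ Ideal.span {d}) :=
    Ring.HasFiniteQuotients.finiteQuotient (mt Ideal.span_singleton_eq_bot.1 hd)
  obtain ⟨i, j, hij, heq⟩ := Finite.exists_ne_map_eq_of_infinite
    (fun i : ℕ ↦ Ideal.Quotient.mk (Ideal.span {d}) (x ^ i))
  wlog hlt : i < j generalizing i j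
  · exact this j i hij.symm heq.symm (by omega)
  rw [Ideal.Quotient.eq, Ideal.mem_span_singleton] at heq
  obtain ⟨m, rfl⟩ := Nat.exists_eq_add_of_lt hlt
  exact ⟨i, m, by convert heq using 1; ring⟩

theorem exists_dvd_unit_pow_sub_one [Ring.HasFiniteQuotients R] (u : Rˣ) {d : R} (hd : d ≠ 0) :
    ∃ k : ℕ, 0 < k ∧ d ∣ (u : R) ^ k - 1 := by
  obtain ⟨i, m, h⟩ := exists_dvd_pow_mul_one_sub_pow (u : R) hd
  exact ⟨m + 1, m.succ_pos, (dvd_sub_comm).1 (((u.isUnit.pow i).dvd_mul_left).1 h)⟩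

/-- Finite rings have stable range one. -/
theorem exists_isCoprime_add_mul [Ring.HasFiniteQuotients R] {a b : R} (h : IsCoprime a b) {N : R}
    (hN : N ≠ 0) : ∃ y, IsCoprime (b + y * a) N := by
  obtain ⟨i, m, hdvd⟩ := exists_dvd_pow_mul_one_sub_pow b hN
  have hb : IsCoprime (1 - b ^ (m + 1)) b := ⟨1, b ^ m, by ring⟩
  have hleft : IsCoprime (b + (1 - b ^ (m + 1)) * a) b :=
    isCoprime_of_dvd_sub (hb.mul_left h) ⟨1, by ring⟩
  have hright : IsCoprime (b + (1 - b ^ (m + 1)) * a) (1 - b ^ (m + 1)) :=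
    isCoprime_of_dvd_sub hb.symm ⟨a, by ring⟩
  exact ⟨_, (hleft.pow_right.mul_right hright).of_isCoprime_of_dvd_right hdvd⟩

theorem exists_one_add_pow_eq {n : ℕ} {d : R} (hd : (n : R) ^ 2 ∣ d) (j l : ℕ) :
    ∃ y, (1 + d) ^ (n ^ j * l) = 1 + n ^ j * d * (l + n * y) := by
  obtain ⟨d', hd'⟩ := hd
  induction j with
  | zero =>
    obtain ⟨r, hr⟩ := Polynomial.powAddExpansion 1 d l
    refine ⟨n * d' * r, ?_⟩
    rw [pow_zero, one_mul, hr]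
    linear_combination (d * r) * hd'
  | succ j ih =>
    obtain ⟨y, hy⟩ := ih
    obtain ⟨r, hr⟩ := Polynomial.powAddExpansion 1 ((n : R) ^ j * d * (l + n * y)) n
    refine ⟨y + n ^ j * d' * (l + n * y) ^ 2 * r, ?_⟩
    rw [pow_succ, show n ^ j * n * l = (n ^ j * l) * n by ring, pow_mul, hy, hr]
    linear_combination ((n : R) ^ j * d * ((n : R) ^ j * (l + n * y) ^ 2 * r)) * hd'

end CommRing

/-! ### Cyclic moduli -/

/-- `t` is a *cyclic modulus* of level `n` when `R ⧸ (t)` is the ring `ℤ ⧸ n` and the cofactor of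
`t` in `n` is prime to `t`, so that the powers of `t` have cyclic quotients as well. Modulo such an
element congruences in `R` can be solved by integers. -/
structure IsCyclicModulus {R : Type*} [CommRing R] (t : R) (n : ℕ) : Prop where
  pos : 0 < n
  exists_cofactor : ∃ t', (n : R) = t * t' ∧ IsCoprime t t'
  dvd_of_dvd_intCast : ∀ k : ℤ, t ∣ (k : R) → (n : ℤ) ∣ k
  exists_int_dvd_sub : ∀ z : R, ∃ k : ℤ, t ∣ z - k

namespace IsCyclicModulus

variable {R : Type*} [CommRing R] {t : R} {n : ℕ}

theorem dvd_natCast (h : IsCyclicModulus t n) : t ∣ (n : R) :=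
  let ⟨t', ht', _⟩ := h.exists_cofactor
  ⟨t', ht'⟩

theorem exists_nat_dvd_sub (h : IsCyclicModulus t n) (z : R) : ∃ k : ℕ, t ∣ z - k := by
  obtain ⟨k, hk⟩ := h.exists_int_dvd_sub z
  have hnonneg : 0 ≤ k % n := Int.emod_nonneg _ (by exact_mod_cast h.pos.ne')
  refine ⟨(k % n).toNat, ?_⟩
  have hcast : (((k % n).toNat : ℕ) : R) = k - n * (k / n : ℤ) := by
    rw [← Int.cast_natCast, Int.toNat_of_nonneg hnonneg, Int.emod_def]
    push_cast
    rfl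
  rw [hcast, show z - ((k : R) - n * (k / n : ℤ)) = z - k + n * (k / n : ℤ) by ring]
  exact hk.add (h.dvd_natCast.mul_right _)

theorem exists_nat_dvd_sub_mul (h : IsCyclicModulus t n) {s : R} (hs : IsCoprime t s) (w : R) :
    ∃ l : ℕ, t ∣ w - s * l := by
  obtain ⟨x, y, hxy⟩ := hs
  obtain ⟨l, hl⟩ := h.exists_nat_dvd_sub (y * w)
  refine ⟨l, ?_⟩
  rw [show w - s * l = t * (x * w) + s * (y * w - l) by linear_combination -w * hxy]
  exact (Dvd.intro _ rfl).add (hl.mul_left s)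

theorem exists_int_pow_dvd_sub (h : IsCyclicModulus t n) (i : ℕ) (z : R) :
    ∃ k : ℤ, t ^ i ∣ z - k := by
  obtain ⟨t', hn, hcop⟩ := h.exists_cofactor
  induction i with
  | zero => exact ⟨0, by simp⟩
  | succ i ih =>
    obtain ⟨k, w, hw⟩ := ih
    obtain ⟨l, hl⟩ := h.exists_nat_dvd_sub_mul (hcop.pow_right (n := i)) w
    refine ⟨k + (n : ℤ) ^ i * l, ?_⟩
    have hsplit : z - ((k + (n : ℤ) ^ i * l : ℤ) : R) = t ^ i * (w - t' ^ i * l) := by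
      push_cast
      rw [hn, mul_pow]
      linear_combination hw
    rw [hsplit, pow_succ]
    exact mul_dvd_mul_left _ hl

theorem isCoprime_natCast (h : IsCyclicModulus t n) {j : ℤ} (hj : IsCoprime (j : R) t) :
    IsCoprime j (n : ℤ) := by
  rw [Int.isCoprime_iff_gcd_eq_one]
  obtain ⟨m, hm⟩ : (Int.gcd j n : ℤ) ∣ n := Int.gcd_dvd_right _ _
  have hn : (n : ℤ) ≠ 0 := by exact_mod_cast h.pos.ne'
  have hgj : ((Int.gcd j n : ℤ) : R) ∣ (j : R) :=
    map_dvd (Int.castRingHom R) (Int.gcd_dvd_left j n)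
  have hcop : IsCoprime t ((Int.gcd j n : ℤ) : R) := (hj.of_isCoprime_of_dvd_left hgj).symm
  have htm : t ∣ ((Int.gcd j n : ℤ) : R) * (m : R) := by
    rw [← Int.cast_mul, ← hm, Int.cast_natCast]
    exact h.dvd_natCast
  obtain ⟨r, hr⟩ := h.dvd_of_dvd_intCast m (hcop.dvd_of_dvd_mul_left htm)
  have hone : (Int.gcd j n : ℤ) * r = 1 := by
    apply mul_left_cancel₀ hn
    linear_combination -(Int.gcd j n : ℤ) * hr - hm
  exact_mod_cast Int.eq_one_of_mul_eq_one_right (Int.natCast_nonneg _) hone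

theorem isCoprime_intCast (h : IsCyclicModulus t n) {j : ℤ} (hj : IsCoprime j (n : ℤ)) :
    IsCoprime (j : R) t := by
  have hcast : IsCoprime (j : R) (n : R) := by simpa using hj.map (Int.castRingHom R)
  exact hcast.of_isCoprime_of_dvd_right h.dvd_natCast

theorem exists_dvd_sub_one_add_pow (h : IsCyclicModulus t n) {d : R} (hd : (n : R) ^ 2 ∣ d)
    {z : R} (hz : d ∣ z - 1) (j : ℕ) : ∃ k : ℕ, d * t ^ j ∣ z - (1 + d) ^ k := by
  obtain ⟨t', hn, hcop⟩ := h.exists_cofactor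
  have htd : t ∣ d := (h.dvd_natCast.trans (dvd_pow_self _ two_ne_zero)).trans hd
  induction j with
  | zero => exact ⟨0, by simpa using hz⟩
  | succ j ih =>
    obtain ⟨k, w, hw⟩ := ih
    obtain ⟨l, hl⟩ := h.exists_nat_dvd_sub_mul (hcop.pow_right (n := j)) w
    obtain ⟨y, hy⟩ := exists_one_add_pow_eq hd j l
    have hk : t ∣ (1 + d) ^ k - 1 := htd.trans (by simpa using sub_one_dvd_pow_sub_one (1 + d) k)
    refine ⟨k + n ^ j * l, ?_⟩
    have hsplit : z - (1 + d) ^ (k + n ^ j * l) = d * t ^ j * ((w - t' ^ j * l)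
        - ((1 + d) ^ k - 1) * (t' ^ j * l) - t * ((1 + d) ^ k * t' ^ j * t' * y)) := by
      rw [pow_add, hy, hn, mul_pow]
      linear_combination hw
    rw [hsplit, pow_succ, ← mul_assoc]
    exact mul_dvd_mul_left _ ((hl.sub (hk.mul_right _)).sub (Dvd.intro _ rfl))

theorem exists_pow_dvd_one_add_pow_mul_sub [Ring.HasFiniteQuotients R] (h : IsCyclicModulus t n)
    {d : R} (hd : (n : R) ^ 2 ∣ d) (hd0 : d ≠ 0) :
    ∃ e : ℕ, ∀ (i : ℕ) (a a' : R), IsCoprime a t → t ^ e ∣ a' - a →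
      ∃ k : ℕ, t ^ i ∣ (1 + d) ^ k * a - a' := by
  obtain ⟨e, m, g, hg⟩ := exists_dvd_pow_mul_one_sub_pow t hd0
  refine ⟨e, fun i a a' ha haa' ↦ ?_⟩
  obtain ⟨c, c', hc⟩ := ha.pow_right (n := i + e)
  obtain ⟨x, y, hxy⟩ : IsCoprime (1 - t ^ (m + 1)) (t ^ i) :=
    IsCoprime.pow_right ⟨1, t ^ m, by ring⟩
  obtain ⟨s, hs⟩ : t ^ e ∣ a' * c - 1 := by
    obtain ⟨s, hs⟩ := haa'
    exact ⟨s * c - c' * t ^ i, by rw [pow_add] at hc; linear_combination c * hs + hc⟩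
  -- `a' * c = 1 + t ^ e * s`, and `t ^ e` is a multiple of `d` modulo `t ^ i`
  have hz : t ^ i ∣ a' * c - (1 + d * (g * x * s)) :=
    ⟨t ^ e * s * y, by linear_combination hs + s * x * hg - t ^ e * s * hxy⟩
  obtain ⟨k, hk⟩ := h.exists_dvd_sub_one_add_pow hd (z := 1 + d * (g * x * s))
    ⟨g * x * s, by ring⟩ i
  have hinv : t ^ i ∣ 1 - c * a := ⟨c' * t ^ e, by rw [pow_add] at hc; linear_combination -hc⟩
  refine ⟨k, ?_⟩
  have hsplit : (1 + d) ^ k * a - a' = -((1 + d * (g * x * s) - (1 + d) ^ k) * a)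
      - (a' * c - (1 + d * (g * x * s))) * a - a' * (1 - c * a) := by ring
  rw [hsplit]
  exact ((((dvd_of_mul_left_dvd hk).mul_right a).neg_right).sub (hz.mul_right a)).sub
    (hinv.mul_left a')

theorem exists_unit_pow_dvd_sq_mul_sub [IsDomain R] [CharZero R] [Ring.HasFiniteQuotients R]
    (h : IsCyclicModulus t n) {u : Rˣ} (hu : ¬ IsOfFinOrder u) {Q : R} (hQ : Q ≠ 0) :
    ∃ e : ℕ, ∀ (i : ℕ) (a a' : R), IsCoprime a t → t ^ e ∣ a' - a →
      ∃ v : Rˣ, Q ∣ (v : R) - 1 ∧ t ^ i ∣ (v : R) ^ 2 * a - a' := by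
  have hn : (n : R) ≠ 0 := by exact_mod_cast h.pos.ne'
  obtain ⟨k, hk, hdvd⟩ := exists_dvd_unit_pow_sub_one u (mul_ne_zero hQ (pow_ne_zero 2 hn))
  have hd : (n : R) ^ 2 ∣ ((u : R) ^ k) ^ 2 - 1 :=
    ((Dvd.intro_left _ rfl).trans hdvd).trans (sub_one_dvd_pow_sub_one _ 2)
  have hd0 : ((u : R) ^ k) ^ 2 - 1 ≠ 0 := fun h0 ↦ hu <| isOfFinOrder_iff_pow_eq_one.2
    ⟨k * 2, by positivity, Units.ext (by push_cast; rw [pow_mul]; exact sub_eq_zero.1 h0)⟩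
  obtain ⟨e, he⟩ := h.exists_pow_dvd_one_add_pow_mul_sub hd hd0
  refine ⟨e, fun i a a' ha haa' ↦ ?_⟩
  obtain ⟨l, hl⟩ := he i a a' ha haa'
  refine ⟨(u ^ k) ^ l, ?_, ?_⟩
  · push_cast
    exact (dvd_of_mul_right_dvd hdvd).trans (sub_one_dvd_pow_sub_one _ l)
  · rw [add_sub_cancel, pow_right_comm] at hl
    exact_mod_cast hl

end IsCyclicModulus

/-! ### Existence of cyclic moduli -/

section Polynomial

open Polynomial

theorem exists_not_dvd_eval_mul {g : ℤ[X]} (hg : g.Monic) {N : ℤ} (h0 : IsCoprime (g.eval 0) N)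
    (hN : ∀ p : ℕ, p.Prime → p ≤ g.natDegree → (p : ℤ) ∣ N) {p : ℕ} (hp : p.Prime) :
    ∃ c : ℕ, ¬ (p : ℤ) ∣ g.eval (N * c) := by
  have : Fact p.Prime := ⟨hp⟩
  by_cases hpN : (p : ℤ) ∣ N
  · refine ⟨0, fun hdvd ↦ (Nat.prime_iff_prime_int.1 hp).not_isUnit ?_⟩
    exact h0.isUnit_of_dvd' (by simpa using hdvd) hpN
  · have hN0 : (N : ZMod p) ≠ 0 := by rwa [Ne, ZMod.intCast_zmod_eq_zero_iff_dvd]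
    have hdeg : (g.map (Int.castRingHom (ZMod p))).natDegree < p :=
      natDegree_map_le.trans_lt (not_le.1 fun hle ↦ hpN (hN p hp hle))
    obtain ⟨x, hx⟩ := exists_eval_ne_zero_of_natDegree_lt_card
      (g.map (Int.castRingHom (ZMod p))) (hg.map _).ne_zero (by simpa using hdeg)
    refine ⟨(x / (N : ZMod p)).val, fun hdvd ↦ hx ?_⟩
    rw [← ZMod.intCast_zmod_eq_zero_iff_dvd, ← eq_intCast (Int.castRingHom (ZMod p)),
      ← eval₂_at_apply, ← eval_map] at hdvd
    simpa [mul_div_cancel₀ _ hN0] using hdvd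

theorem exists_isCoprime_eval_mul {g : ℤ[X]} (hg : g.Monic) {N : ℤ} (h0 : IsCoprime (g.eval 0) N)
    (hN : ∀ p : ℕ, p.Prime → p ≤ g.natDegree → (p : ℤ) ∣ N) {M : ℤ} (hM : M ≠ 0) :
    ∃ k : ℤ, IsCoprime (g.eval (N * k)) M := by
  have hex : ∀ p : ℕ, ∃ c : ℕ, p.Prime → ¬ (p : ℤ) ∣ g.eval (N * c) := fun p ↦ by
    by_cases hp : p.Prime
    · exact (exists_not_dvd_eval_mul hg h0 hN hp).imp fun c hc _ ↦ hc
    · exact ⟨0, fun h ↦ absurd h hp⟩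
  choose c hc using hex
  obtain ⟨k, hk⟩ := Nat.chineseRemainderOfFinset c id M.natAbs.primeFactors
    (fun p hp ↦ (Nat.prime_of_mem_primeFactors hp).ne_zero)
    (fun p hp q hq hpq ↦ (Nat.coprime_primes (Nat.prime_of_mem_primeFactors hp)
      (Nat.prime_of_mem_primeFactors hq)).2 hpq)
  refine ⟨k, isCoprime_of_prime_dvd (fun h ↦ hM h.2) fun z hz hzg hzM ↦ ?_⟩
  have hp : z.natAbs.Prime := Int.prime_iff_natAbs_prime.1 hz
  have hmem : z.natAbs ∈ M.natAbs.primeFactors :=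
    Nat.mem_primeFactors.2 ⟨hp, Int.natAbs_dvd_natAbs.2 hzM, Int.natAbs_ne_zero.2 hM⟩
  have hcong : (z.natAbs : ℤ) ∣ g.eval (N * (c z.natAbs : ℤ)) - g.eval (N * (k : ℤ)) := by
    refine Dvd.dvd.trans ?_ (sub_dvd_eval_sub _ _ g)
    rw [← mul_sub]
    exact (Nat.modEq_iff_dvd.1 (hk _ hmem)).mul_left N
  exact hc _ hp ((dvd_sub_left (Int.natAbs_dvd.2 hzg)).1 hcong)

variable {R : Type*} [CommRing R]

theorem exists_intCast_eval_eq_mul {g : ℤ[X]} {r : R} (hr : aeval r g = 0) (c : ℤ) :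
    ∃ s, ((g.eval c : ℤ) : R) = (r - c) * s ∧ r - c ∣ s + aeval r g.derivative := by
  obtain ⟨w, hw⟩ := (g.map (algebraMap ℤ R)).binomExpansion r (c - r)
  rw [add_sub_cancel, derivative_map, eval_intCast_map, eval_map_algebraMap, eval_map_algebraMap,
    hr, algebraMap_int_eq, eq_intCast, Int.cast_id] at hw
  exact ⟨w * (r - c) - aeval r g.derivative, by linear_combination hw, w, by ring⟩

theorem exists_int_dvd_sub_of_mul_eq_aeval {r z : R} {f : ℤ[X]} {D m c : ℤ}
    (hz : (D : R) * z = aeval r f) (hmD : IsCoprime m D) (hm : r - c ∣ (m : R)) :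
    ∃ k : ℤ, r - c ∣ z - k := by
  obtain ⟨x, y, hxy⟩ := hmD
  have hf := sub_dvd_eval_sub r (c : R) (f.map (algebraMap ℤ R))
  rw [eval_map_algebraMap, eval_intCast_map, algebraMap_int_eq, eq_intCast, Int.cast_id] at hf
  have hxy' : (x : R) * m + y * D = 1 := by exact_mod_cast congrArg (Int.cast : ℤ → R) hxy
  refine ⟨y * f.eval c, ?_⟩
  have hsplit : z - ((y * f.eval c : ℤ) : R) =
      m * (x * z) + y * (aeval r f - ((f.eval c : ℤ) : R)) := by
    push_cast
    linear_combination -z * hxy' + y * hz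
  rw [hsplit]
  exact (hm.mul_right _).add (hf.mul_left _)

end Polynomial

theorem IsCyclicModulus.exists_of_intCast_eq_mul {R : Type*} [CommRing R] [IsDomain R] [CharZero R]
    {t s : R} {m : ℤ} (hm : m ≠ 0) (hmt : (m : R) = t * s) (hts : IsCoprime t s)
    (hsurj : ∀ z : R, ∃ k : ℤ, t ∣ z - k) : ∃ n : ℕ, IsCyclicModulus t n ∧ (n : ℤ) ∣ m := by
  let I : Ideal ℤ := (Ideal.span {t}).comap (Int.castRingHom R)
  have hI (j : ℤ) : t ∣ (j : R) ↔ ((Submodule.IsPrincipal.generator I).natAbs : ℤ) ∣ j := by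
    rw [Int.natAbs_dvd, ← Submodule.IsPrincipal.mem_iff_generator_dvd I]
    simp [I, Ideal.mem_comap, Ideal.mem_span_singleton]
  set n := (Submodule.IsPrincipal.generator I).natAbs
  obtain ⟨j, hj⟩ : (n : ℤ) ∣ m := (hI m).1 ⟨s, hmt⟩
  have hn : n ≠ 0 := fun h0 ↦ hm (by rw [hj, h0]; simp)
  obtain ⟨t', ht'⟩ : t ∣ ((n : ℤ) : R) := (hI n).2 dvd_rfl
  have ht0 : t ≠ 0 := by
    rintro rfl
    exact hm (by simpa using hmt)
  have hs : s = t' * j := mul_left_cancel₀ ht0 <| by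
    rw [← hmt, hj, Int.cast_mul, ht', mul_assoc]
  exact ⟨n, ⟨Nat.pos_of_ne_zero hn, ⟨t', by exact_mod_cast ht', (hs ▸ hts).of_mul_right_left⟩,
    fun k ↦ (hI k).1, hsurj⟩, ⟨j, hj⟩⟩

section NumberField

open Polynomial

open scoped IntermediateField

variable {F : Type*} [Field F] [NumberField F]

theorem dvd_norm (x : 𝓞 F) : x ∣ ((Algebra.norm ℤ x : ℤ) : 𝓞 F) := by
  have hmem := Ideal.absNorm_mem (Ideal.span {x})
  rw [Ideal.mem_span_singleton, Ideal.absNorm_span_singleton] at hmem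
  refine hmem.trans ?_
  rw [← Int.cast_natCast]
  exact map_dvd (Int.castRingHom (𝓞 F)) (Int.natAbs_dvd.2 dvd_rfl)

theorem natCast_dvd_norm_sub_one {N : ℕ} {x : 𝓞 F} (hx : (N : 𝓞 F) ∣ x - 1) :
    (N : ℤ) ∣ Algebra.norm ℤ x - 1 := by
  obtain ⟨w, hw⟩ := hx
  set b := RingOfIntegers.basis F
  have hmat : (Algebra.leftMulMatrix b x).map (Int.castRingHom (ZMod N)) = 1 := by
    rw [show x = 1 + (N : ℤ) • w by simp [← hw], map_add, map_one, map_zsmul]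
    ext i j
    rw [Matrix.map_apply, Matrix.add_apply, Matrix.smul_apply, map_add, smul_eq_mul, map_mul]
    rcases eq_or_ne i j with rfl | hij <;> simp [*]
  rw [← ZMod.intCast_zmod_eq_zero_iff_dvd, Int.cast_sub, Int.cast_one, sub_eq_zero,
    Algebra.norm_eq_matrix_det b x, ← eq_intCast (Int.castRingHom (ZMod N)), RingHom.map_det,
    RingHom.mapMatrix_apply, hmat, Matrix.det_one]

theorem isCoprime_norm_natCast {N : ℕ} {x : 𝓞 F} (hx : IsCoprime x (N : 𝓞 F)) :
    IsCoprime (Algebra.norm ℤ x) (N : ℤ) := by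
  obtain ⟨y, w, h⟩ := hx
  obtain ⟨k, hk⟩ := natCast_dvd_norm_sub_one (N := N) (x := y * x) ⟨-w, by linear_combination h⟩
  rw [map_mul] at hk
  exact ⟨Algebra.norm ℤ y, -k, by linear_combination hk⟩

variable (F) in
theorem exists_adjoin_coe_eq_top : ∃ θ : 𝓞 F, ℚ⟮(θ : F)⟯ = ⊤ := by
  obtain ⟨α, hα⟩ := Field.exists_primitive_element ℚ F
  obtain ⟨y, hy, hyα⟩ := IsAlgebraic.exists_integral_multiple (R := ℤ)
    ((IsFractionRing.isAlgebraic_iff ℤ ℚ F).2 (Algebra.IsAlgebraic.isAlgebraic α))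
  obtain ⟨θ, hθ⟩ : ∃ θ : 𝓞 F, (θ : F) = y • α := ⟨⟨y • α, hyα⟩, rfl⟩
  refine ⟨θ, ?_⟩
  rw [hθ, eq_top_iff, ← hα, IntermediateField.adjoin_simple_le_iff]
  have hinv : (y : ℚ)⁻¹ • y • α = α := by
    rw [← Int.cast_smul_eq_zsmul ℚ, smul_smul, inv_mul_cancel₀ (by exact_mod_cast hy), one_smul]
  simpa only [hinv] using
    ℚ⟮y • α⟯.smul_mem (x := (y : ℚ)⁻¹) (IntermediateField.mem_adjoin_simple_self ℚ _)

theorem exists_dvd_sub_and_adjoin_eq_top (r : 𝓞 F) {N : ℕ} (hN : N ≠ 0) :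
    ∃ r' : 𝓞 F, (N : 𝓞 F) ∣ r' - r ∧ ℚ⟮(r' : F)⟯ = ⊤ := by
  obtain ⟨θ, hθ⟩ := exists_adjoin_coe_eq_top F
  have := Field.finite_intermediateField_of_exists_primitive_element ℚ F ⟨_, hθ⟩
  obtain ⟨c, c', hne, heq⟩ := Finite.exists_ne_map_eq_of_infinite
    (fun c : ℕ ↦ ℚ⟮((r + N * c * θ : 𝓞 F) : F)⟯)
  refine ⟨r + N * c * θ, ⟨c * θ, by ring⟩, ?_⟩
  set E := ℚ⟮((r + N * c * θ : 𝓞 F) : F)⟯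
  have hmem : ((r + N * c * θ : 𝓞 F) : F) ∈ E := IntermediateField.mem_adjoin_simple_self ℚ _
  have hmem' : ((r + N * c' * θ : 𝓞 F) : F) ∈ E := by
    rw [show E = _ from heq]
    exact IntermediateField.mem_adjoin_simple_self ℚ _
  have hq : ((N : ℚ) * (c - c')) ≠ 0 :=
    mul_ne_zero (by exact_mod_cast hN) (sub_ne_zero.2 (by exact_mod_cast hne))
  have hsub : ((r + N * c * θ : 𝓞 F) : F) - ((r + N * c' * θ : 𝓞 F) : F) =
      ((N : ℚ) * (c - c')) • (θ : F) := by
    rw [Algebra.smul_def]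
    simp only [map_add, map_mul, map_natCast, map_sub]
    ring
  have hθE := E.smul_mem (x := ((N : ℚ) * (c - c'))⁻¹) (hsub ▸ E.sub_mem hmem hmem')
  rw [smul_smul, inv_mul_cancel₀ hq, one_smul] at hθE
  rwa [eq_top_iff, ← hθ, IntermediateField.adjoin_simple_le_iff]

/-- The power basis of powers of a generator of the field. -/
noncomputable def powerBasisOfAdjoin {r : 𝓞 F} (hr : ℚ⟮(r : F)⟯ = ⊤) : PowerBasis ℚ F :=
  .ofAdjoinEqTop (x := (r : F)) r.isIntegral_coe.tower_top <| by
    simpa [IntermediateField.adjoin_simple_toSubalgebra_of_isAlgebraic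
      (Algebra.IsAlgebraic.isAlgebraic (r : F))] using congrArg IntermediateField.toSubalgebra hr

theorem exists_intCast_mul_eq_aeval {r : 𝓞 F} (hr : ℚ⟮(r : F)⟯ = ⊤) :
    ∃ D : ℤ, D ≠ 0 ∧ ∀ z : 𝓞 F, ∃ f : ℤ[X], (D : 𝓞 F) * z = aeval r f := by
  let B := powerBasisOfAdjoin hr
  have hB : B.gen = (r : F) := PowerBasis.ofAdjoinEqTop_gen _ _
  have hdisc : IsIntegral ℤ (Algebra.discr ℚ B.basis) := Algebra.discr_isIntegral _ fun i ↦ by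
    rw [PowerBasis.basis_eq_pow, hB]
    exact r.isIntegral_coe.pow _
  obtain ⟨D, hD⟩ := IsIntegrallyClosed.isIntegral_iff.1 hdisc
  refine ⟨D, fun h0 ↦ Algebra.discr_not_zero_of_basis ℚ B.basis (by rw [← hD, h0, map_zero]),
    fun z ↦ ?_⟩
  have hmem := Algebra.discr_mul_isIntegral_mem_adjoin ℚ (R := ℤ) (B := B)
    (hB ▸ r.isIntegral_coe) (z := (z : F)) z.isIntegral_coe
  rw [hB, Algebra.adjoin_singleton_eq_range_aeval] at hmem
  obtain ⟨f, hf⟩ := hmem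
  refine ⟨f, RingOfIntegers.coe_injective ?_⟩
  rw [← aeval_algebraMap_apply F r f]
  refine Eq.trans ?_ hf.symm
  rw [← hD, Algebra.smul_def]
  simp

theorem map_minpoly_int (r : 𝓞 F) :
    (minpoly ℤ r).map (algebraMap ℤ ℚ) = minpoly ℚ (r : F) := by
  rw [minpoly.isIntegrallyClosed_eq_field_fractions' ℚ r.isIntegral_coe, RingOfIntegers.minpoly_coe]

theorem natDegree_minpoly_of_adjoin_eq_top {r : 𝓞 F} (hr : ℚ⟮(r : F)⟯ = ⊤) :
    (minpoly ℤ r).natDegree = Module.finrank ℚ F := by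
  rw [← (Field.primitive_element_iff_minpoly_natDegree_eq ℚ (r : F)).1 hr, ← map_minpoly_int,
    (minpoly.monic r.isIntegral).natDegree_map]

theorem eval_zero_minpoly_dvd_norm {r : 𝓞 F} (hr : ℚ⟮(r : F)⟯ = ⊤) :
    (minpoly ℤ r).eval 0 ∣ Algebra.norm ℤ r := by
  let B := powerBasisOfAdjoin hr
  have hB : B.gen = (r : F) := PowerBasis.ofAdjoinEqTop_gen _ _
  have hnorm := Algebra.PowerBasis.norm_gen_eq_coeff_zero_minpoly B
  rw [hB, ← map_minpoly_int, coeff_map, ← Algebra.coe_norm_int] at hnorm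
  refine ⟨(-1) ^ B.dim, ?_⟩
  rw [← coeff_zero_eq_eval_zero, mul_comm, ← @Int.cast_inj ℚ]
  simpa using hnorm

theorem aeval_derivative_minpoly_ne_zero (r : 𝓞 F) : aeval r (minpoly ℤ r).derivative ≠ 0 := by
  have hsep := (minpoly.irreducible (r.isIntegral_coe.tower_top (A := ℚ))).separable
  have hder := hsep.aeval_derivative_ne_zero (minpoly.aeval ℚ (r : F))
  rw [← map_minpoly_int, derivative_map, aeval_map_algebraMap, aeval_algebraMap_apply] at hder
  exact fun h0 ↦ hder (by rw [h0, map_zero])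

-- With `g` the minimal polynomial of a generator `r` of the field, the cyclic modulus is `r - c`
-- for an integer `c` such that `g(c)` is prime to the index of `ℤ[r]` and to the norm of `g'(r)`.
theorem exists_isCyclicModulus_natCast_dvd_sub {r : 𝓞 F} {N : ℕ} (hN : N ≠ 0)
    (hNp : ∀ p : ℕ, p.Prime → p ≤ Module.finrank ℚ F → p ∣ N) (hr : IsCoprime r (N : 𝓞 F))
    {L : ℕ} (hL : L ≠ 0) :
    ∃ (t : 𝓞 F) (n : ℕ), IsCyclicModulus t n ∧ (N : 𝓞 F) ∣ t - r ∧ n.Coprime L := by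
  obtain ⟨r', hr', hprim⟩ := exists_dvd_sub_and_adjoin_eq_top r hN
  obtain ⟨D, hD0, hD⟩ := exists_intCast_mul_eq_aeval hprim
  set g := minpoly ℤ r'
  set Δ := Algebra.norm ℤ (aeval r' g.derivative)
  have hΔ : Δ ≠ 0 := mt Algebra.norm_eq_zero_iff.1 (aeval_derivative_minpoly_ne_zero r')
  have hg0 : IsCoprime (g.eval 0) N :=
    (isCoprime_norm_natCast (isCoprime_of_dvd_sub hr hr')).of_isCoprime_of_dvd_left
      (eval_zero_minpoly_dvd_norm hprim)
  obtain ⟨k, hk⟩ := exists_isCoprime_eval_mul (minpoly.monic r'.isIntegral) hg0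
    (fun p hp hle ↦ by
      exact_mod_cast hNp p hp (hle.trans_eq (natDegree_minpoly_of_adjoin_eq_top hprim)))
    (mul_ne_zero (mul_ne_zero hD0 hΔ) (by exact_mod_cast mul_ne_zero two_ne_zero hL :
      ((2 * L : ℕ) : ℤ) ≠ 0))
  set c : ℤ := N * k
  obtain ⟨s, hs, hs'⟩ := exists_intCast_eval_eq_mul (minpoly.aeval ℤ r') c
  have hder : IsCoprime (r' - c) (aeval r' g.derivative) := by
    have hcast : IsCoprime ((g.eval c : ℤ) : 𝓞 F) (Δ : 𝓞 F) := by
      simpa using hk.of_mul_right_left.of_mul_right_right.map (Int.castRingHom (𝓞 F))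
    exact (hcast.of_isCoprime_of_dvd_left ⟨s, hs⟩).of_isCoprime_of_dvd_right (dvd_norm _)
  have hcop : IsCoprime (r' - c) s := by
    refine (isCoprime_of_dvd_sub hder.symm.neg_left ?_).symm
    rwa [sub_neg_eq_add]
  have hm0 : g.eval c ≠ 0 := by
    intro h0
    have hunit := isCoprime_zero_left.1 (h0 ▸ hk.of_mul_right_right)
    rw [Int.isUnit_iff] at hunit
    omega
  obtain ⟨n, hn, hnm⟩ := IsCyclicModulus.exists_of_intCast_eq_mul hm0 hs hcop fun z ↦
    let ⟨f, hf⟩ := hD z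
    exists_int_dvd_sub_of_mul_eq_aeval hf hk.of_mul_right_left.of_mul_right_left ⟨s, hs⟩
  refine ⟨r' - c, n, hn, ?_, ?_⟩
  · rw [sub_right_comm]
    exact hr'.sub ⟨k, by simp [c]⟩
  · exact Nat.isCoprime_iff_coprime.1 ((hk.of_isCoprime_of_dvd_left hnm).of_isCoprime_of_dvd_right
      ⟨D * Δ * 2, by push_cast; ring⟩)

theorem exists_isCyclicModulus_dvd_sub {a b : 𝓞 F} (h : IsCoprime a b) (ha : a ≠ 0) {L : ℕ}
    (hL : L ≠ 0) :
    ∃ (t : 𝓞 F) (n : ℕ), IsCyclicModulus t n ∧ a ∣ t - b ∧ n.Coprime L := by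
  set N := (Algebra.norm ℤ a).natAbs * (Module.finrank ℚ F).factorial
  have hN : N ≠ 0 := mul_ne_zero
    (Int.natAbs_ne_zero.2 (mt Algebra.norm_eq_zero_iff.1 ha)) (Nat.factorial_ne_zero _)
  have haN : a ∣ (N : 𝓞 F) := by
    have hnorm : ((Algebra.norm ℤ a : ℤ) : 𝓞 F) ∣ ((N : ℤ) : 𝓞 F) :=
      map_dvd (Int.castRingHom (𝓞 F)) (Int.dvd_natCast.2 (Dvd.intro _ rfl))
    exact (dvd_norm a).trans (by exact_mod_cast hnorm)
  obtain ⟨y, hy⟩ := exists_isCoprime_add_mul h (N := (N : 𝓞 F)) (by exact_mod_cast hN)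
  obtain ⟨t, n, ht, htr, hn⟩ := exists_isCyclicModulus_natCast_dvd_sub hN
    (fun p hp hle ↦ (hp.dvd_factorial.2 hle).mul_left _) hy hL
  refine ⟨t, n, ht, ?_, hn⟩
  rw [show t - b = t - (b + y * a) + a * y by ring]
  exact (haN.trans htr).add (Dvd.intro _ rfl)

end NumberField

/-! ### Symbols of rows -/

section RowSymbol

variable {R : Type*} [CommRing R]

/-- The matrix `!![a, b; c, d]` as an element of `SL₂(R)`. -/
def mkSL2 (a b c d : R) (h : a * d - b * c = 1) : SpecialLinearGroup (Fin 2) R :=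
  ⟨!![a, b; c, d], by rw [det_fin_two_of, h]⟩

@[simp] theorem mkSL2_zero_zero (a b c d : R) (h) : (mkSL2 a b c d h) 0 0 = a := rfl
@[simp] theorem mkSL2_zero_one (a b c d : R) (h) : (mkSL2 a b c d h) 0 1 = b := rfl
@[simp] theorem mkSL2_one_zero (a b c d : R) (h) : (mkSL2 a b c d h) 1 0 = c := rfl
@[simp] theorem mkSL2_one_one (a b c d : R) (h) : (mkSL2 a b c d h) 1 1 = d := rfl

theorem SL2_det_eq_one (x : SpecialLinearGroup (Fin 2) R) :
    x 0 0 * x 1 1 - x 0 1 * x 1 0 = 1 := by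
  rw [← det_fin_two, x.det_coe]

theorem SL2_mul_apply (x y : SpecialLinearGroup (Fin 2) R) (i j : Fin 2) :
    (x * y) i j = x i 0 * y 0 j + x i 1 * y 1 j := by
  simp [Matrix.mul_apply, Fin.sum_univ_two]

theorem SL2_coe_inv (x : SpecialLinearGroup (Fin 2) R) :
    ((x⁻¹ : SpecialLinearGroup (Fin 2) R) : Matrix (Fin 2) (Fin 2) R) =
      !![x 1 1, -x 0 1; -x 1 0, x 0 0] := by
  simp [adjugate_fin_two]

theorem SL2_ext {x y : SpecialLinearGroup (Fin 2) R} (h00 : x 0 0 = y 0 0)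
    (h01 : x 0 1 = y 0 1) (h10 : x 1 0 = y 1 0) (h11 : x 1 1 = y 1 1) : x = y := by
  ext i j
  fin_cases i <;> fin_cases j <;> assumption

/-- The level-`q` subgroup of `SL₂(R)` used in the torsion argument: off-diagonal entries in `(q)`
and diagonal entries in `1 + (q ^ 2)`. -/
def levelSubgroup (q : R) : Subgroup (SpecialLinearGroup (Fin 2) R) where
  carrier := {x | q ∣ x 0 1 ∧ q ∣ x 1 0 ∧ q ^ 2 ∣ x 0 0 - 1 ∧ q ^ 2 ∣ x 1 1 - 1}
  one_mem' := by simp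
  mul_mem' := by
    rintro x y ⟨⟨a, ha⟩, ⟨b, hb⟩, ⟨c, hc⟩, ⟨d, hd⟩⟩ ⟨⟨a', ha'⟩, ⟨b', hb'⟩, ⟨c', hc'⟩, ⟨d', hd'⟩⟩
    simp only [Set.mem_ofPred_eq, SL2_mul_apply]
    rw [sub_eq_iff_eq_add] at hc hd hc' hd'
    rw [ha, hb, hc, hd, ha', hb', hc', hd']
    refine ⟨?_, ?_, ?_, ?_⟩
    · exact ⟨(q ^ 2 * c + 1) * a' + a * (q ^ 2 * d' + 1), by ring⟩
    · exact ⟨b * (q ^ 2 * c' + 1) + (q ^ 2 * d + 1) * b', by ring⟩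
    · exact ⟨q ^ 2 * c * c' + c + c' + a * b', by ring⟩
    · exact ⟨q ^ 2 * d * d' + d + d' + b * a', by ring⟩
  inv_mem' := by
    rintro x ⟨h01, h10, h00, h11⟩
    simp only [Set.mem_ofPred_eq, SL2_coe_inv]
    exact ⟨h01.neg_right, h10.neg_right, h11, h00⟩

theorem mem_levelSubgroup_of_dvd {q : R} {x : SpecialLinearGroup (Fin 2) R} (h01 : q ∣ x 0 1)
    (h10 : q ∣ x 1 0) (h00 : q ^ 2 ∣ x 0 0 - 1) : x ∈ levelSubgroup q := by
  refine ⟨h01, h10, h00, ?_⟩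
  obtain ⟨a, ha⟩ := h01
  obtain ⟨b, hb⟩ := h10
  obtain ⟨c, hc⟩ := h00
  have hdet := SL2_det_eq_one x
  rw [ha, hb] at hdet
  exact ⟨a * b - c * x 1 1, by linear_combination hdet - x 1 1 * hc⟩

/-- `(a, b)` is the first row of an element of `levelSubgroup q`; see `isLevelRow_apply` and
`IsLevelRow.exists_apply_eq`. -/
structure IsLevelRow (q a b : R) : Prop where
  sq_dvd_sub_one : q ^ 2 ∣ a - 1
  dvd : q ∣ b
  isCoprime : IsCoprime a b

theorem isCoprime_of_sq_dvd_sub_one {q a : R} (h : q ^ 2 ∣ a - 1) : IsCoprime a q := by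
  obtain ⟨w, hw⟩ := h
  exact ⟨1, -q * w, by linear_combination hw⟩

theorem isLevelRow_apply {q : R} (x : levelSubgroup q) :
    IsLevelRow q (x.1 0 0) (x.1 0 1) :=
  ⟨x.2.2.2.1, x.2.1, x.1 1 1, -x.1 1 0, by linear_combination SL2_det_eq_one x.1⟩

namespace IsLevelRow

variable {q a b : R} (h : IsLevelRow q a b)
include h

theorem exists_dvd_lower {T : R} (hT : IsCoprime a T) :
    ∃ x : levelSubgroup q, x.1 0 0 = a ∧ x.1 0 1 = b ∧ T ∣ x.1 1 0 := by
  obtain ⟨u, w, huw⟩ := h.isCoprime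
  obtain ⟨m, m', hm⟩ : IsCoprime a (q * T) :=
    (isCoprime_of_sq_dvd_sub_one h.sq_dvd_sub_one).mul_right hT
  have hdet : a * (u + b * (m * w)) - b * (-w + a * (m * w)) = 1 := by linear_combination huw
  have hlower : -w + a * (m * w) = q * T * (-m' * w) := by linear_combination w * hm
  refine ⟨⟨mkSL2 _ _ _ _ hdet, mem_levelSubgroup_of_dvd h.dvd ?_ h.sq_dvd_sub_one⟩, rfl, rfl, ?_⟩
  · exact ⟨T * (-m' * w), by rw [mkSL2_one_zero, hlower]; ring⟩
  · exact ⟨q * (-m' * w), by rw [mkSL2_one_zero, hlower]; ring⟩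

theorem exists_apply_eq : ∃ x : levelSubgroup q, x.1 0 0 = a ∧ x.1 0 1 = b := by
  obtain ⟨x, h00, h01, _⟩ := h.exists_dvd_lower (T := 1) isCoprime_one_right
  exact ⟨x, h00, h01⟩

theorem congr_right {b' : R} (hb : q * a ∣ b' - b) : IsLevelRow q a b' where
  sq_dvd_sub_one := h.sq_dvd_sub_one
  dvd := (dvd_iff_dvd_of_dvd_sub ((Dvd.intro _ rfl).trans hb)).2 h.dvd
  isCoprime := (isCoprime_of_dvd_sub h.isCoprime.symm ((Dvd.intro_left _ rfl).trans hb)).symm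

theorem congr_left {a' : R} (ha : q * b ∣ a' - a) : IsLevelRow q a' b where
  sq_dvd_sub_one := by
    have hq : q ^ 2 ∣ a' - a := (sq q ▸ mul_dvd_mul_left q h.dvd).trans ha
    exact sub_add_sub_cancel a' a 1 ▸ hq.add h.sq_dvd_sub_one
  dvd := h.dvd
  isCoprime := isCoprime_of_dvd_sub h.isCoprime ((Dvd.intro_left _ rfl).trans ha)

theorem unit_sq_mul {v : Rˣ} (hv : q ^ 2 ∣ (v : R) - 1) : IsLevelRow q ((v : R) ^ 2 * a) b where
  sq_dvd_sub_one := by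
    have hsplit : (v : R) ^ 2 * a - 1 = (v - 1) * ((v + 1) * a) + (a - 1) := by ring
    exact hsplit ▸ (hv.mul_right _).add h.sq_dvd_sub_one
  dvd := h.dvd
  isCoprime := (isCoprime_mul_unit_left_left (v.isUnit.pow 2) _ _).2 h.isCoprime

end IsLevelRow

/-- The upper elementary matrix of `levelSubgroup q` with upper right entry `q * z`. -/
def upperElementary (q z : R) : levelSubgroup q :=
  ⟨mkSL2 1 (q * z) 0 1 (by ring), mem_levelSubgroup_of_dvd ⟨z, rfl⟩ (dvd_zero _) (by simp)⟩

/-- The lower elementary matrix of `levelSubgroup q` with lower left entry `q * z`. -/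
def lowerElementary (q z : R) : levelSubgroup q :=
  ⟨mkSL2 1 0 (q * z) 1 (by ring), mem_levelSubgroup_of_dvd (dvd_zero _) ⟨z, rfl⟩ (by simp)⟩

variable {q : R} {C : Type*} [Group C] {ρ : levelSubgroup q →* C}

/-- The homomorphism `ρ` is trivial on the elementary matrices of `levelSubgroup q`. -/
structure KillsElementary (ρ : levelSubgroup q →* C) : Prop where
  upper : ∀ z, ρ (upperElementary q z) = 1
  lower : ∀ z, ρ (lowerElementary q z) = 1

theorem KillsElementary.map_lower_unitriangular (hρ : KillsElementary ρ) {x : levelSubgroup q}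
    (h00 : x.1 0 0 = 1) (h01 : x.1 0 1 = 0) : ρ x = 1 := by
  obtain ⟨z, hz⟩ := x.2.2.1
  have hdet := SL2_det_eq_one x.1
  rw [h00, h01] at hdet
  rw [← hρ.lower z]
  congr 1
  exact Subtype.ext (SL2_ext h00 h01 hz ((by linear_combination hdet : x.1 1 1 = 1)))

/-- Any two elements of `levelSubgroup q` with the same first row differ by a lower elementary
matrix. -/
theorem KillsElementary.map_eq_of_row_eq (hρ : KillsElementary ρ) {x y : levelSubgroup q}
    (h0 : x.1 0 0 = y.1 0 0) (h1 : x.1 0 1 = y.1 0 1) : ρ x = ρ y := by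
  rw [← mul_inv_eq_one, ← map_inv, ← map_mul]
  apply hρ.map_lower_unitriangular
  · simp only [Subgroup.coe_mul, Subgroup.coe_inv, SL2_mul_apply, SL2_coe_inv, of_apply, cons_val]
    rw [h0, h1]
    linear_combination SL2_det_eq_one y.1
  · simp only [Subgroup.coe_mul, Subgroup.coe_inv, SL2_mul_apply, SL2_coe_inv, of_apply, cons_val]
    rw [h0, h1]
    ring

open Classical in
/-- The Mennicke-type symbol of `ρ`: its value on any element of `levelSubgroup q` with first row
`(a, b)`. The junk value is `1` when there is no such element. -/
noncomputable def rowSymbol (ρ : levelSubgroup q →* C) (a b : R) : C :=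
  if h : ∃ x : levelSubgroup q, x.1 0 0 = a ∧ x.1 0 1 = b then ρ h.choose else 1

theorem rowSymbol_eq_map (hρ : KillsElementary ρ) {x : levelSubgroup q} {a b : R}
    (ha : x.1 0 0 = a) (hb : x.1 0 1 = b) : rowSymbol ρ a b = ρ x := by
  have h : ∃ y : levelSubgroup q, y.1 0 0 = a ∧ y.1 0 1 = b := ⟨x, ha, hb⟩
  rw [rowSymbol, dif_pos h]
  exact hρ.map_eq_of_row_eq (h.choose_spec.1.trans ha.symm) (h.choose_spec.2.trans hb.symm)

theorem map_eq_rowSymbol (hρ : KillsElementary ρ) (x : levelSubgroup q) :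
    ρ x = rowSymbol ρ (x.1 0 0) (x.1 0 1) :=
  (rowSymbol_eq_map hρ rfl rfl).symm

theorem rowSymbol_congr_right (hρ : KillsElementary ρ) {a b b' : R} (h : IsLevelRow q a b)
    (hb : q * a ∣ b' - b) : rowSymbol ρ a b' = rowSymbol ρ a b := by
  obtain ⟨x, h00, h01⟩ := h.exists_apply_eq
  obtain ⟨w, hw⟩ := hb
  rw [rowSymbol_eq_map hρ h00 h01, rowSymbol_eq_map hρ (x := x * upperElementary q w), map_mul,
    hρ.upper, mul_one]
  · simp [SL2_mul_apply, h00, upperElementary]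
  · simp only [Subgroup.coe_mul, SL2_mul_apply, h00, h01, upperElementary, mkSL2_zero_one,
      mkSL2_one_one]
    linear_combination -hw

theorem rowSymbol_congr_left (hρ : KillsElementary ρ) {a a' b : R} (h : IsLevelRow q a b)
    (ha : q * b ∣ a' - a) : rowSymbol ρ a' b = rowSymbol ρ a b := by
  obtain ⟨x, h00, h01⟩ := h.exists_apply_eq
  obtain ⟨w, hw⟩ := ha
  rw [rowSymbol_eq_map hρ h00 h01, rowSymbol_eq_map hρ (x := x * lowerElementary q w), map_mul,
    hρ.lower, mul_one]
  · simp only [Subgroup.coe_mul, SL2_mul_apply, h00, h01, lowerElementary, mkSL2_zero_zero,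
      mkSL2_one_zero]
    linear_combination -hw
  · simp [SL2_mul_apply, h01, lowerElementary]

theorem rowSymbol_one_left (hρ : KillsElementary ρ) {b : R} (hb : q ∣ b) :
    rowSymbol ρ 1 b = 1 := by
  obtain ⟨z, rfl⟩ := hb
  exact (rowSymbol_eq_map hρ (x := upperElementary q z) rfl rfl).trans (hρ.upper z)

/-- Whitehead's factorisation writes `diag(v, v⁻¹)` as a product of elementary matrices, which lie
in `levelSubgroup q` when `v` is `1` modulo `q ^ 2`. -/
theorem KillsElementary.exists_diagonal_map_eq_one (hρ : KillsElementary ρ) {v : Rˣ}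
    (hv : q ^ 2 ∣ (v : R) - 1) :
    ∃ x : levelSubgroup q, ρ x = 1 ∧ x.1.1 = !![(v : R), 0; 0, ((v⁻¹ : Rˣ) : R)] := by
  obtain ⟨w, hw⟩ := hv
  have hinv : (v : R) * ((v⁻¹ : Rˣ) : R) = 1 := v.mul_inv
  set v' := ((v⁻¹ : Rˣ) : R)
  refine ⟨lowerElementary q (-w * v') * upperElementary q 1 * lowerElementary q w *
    upperElementary q (-v'), by simp [hρ.upper, hρ.lower], ?_⟩
  ext i j
  fin_cases i <;> fin_cases j <;>
    simp only [Fin.zero_eta, Fin.mk_one, Subgroup.coe_mul, SL2_mul_apply, upperElementary,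
      lowerElementary, mkSL2_zero_zero, mkSL2_zero_one, mkSL2_one_zero, mkSL2_one_one, of_apply,
      cons_val]
  · linear_combination -hw
  · linear_combination (q * v') * hw - q * hinv
  · linear_combination (q * v' * w) * hw - (q * w) * hinv
  · linear_combination (-(q ^ 2 * w * v' ^ 2) + v') * hw + (q ^ 2 * w * v' - 1) * hinv

/-- Multiply on both sides by `diag(v, v⁻¹)`. -/
theorem rowSymbol_unit_sq_mul (hρ : KillsElementary ρ) {a b : R} (h : IsLevelRow q a b) {v : Rˣ}
    (hv : q ^ 2 ∣ (v : R) - 1) : rowSymbol ρ ((v : R) ^ 2 * a) b = rowSymbol ρ a b := by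
  obtain ⟨x, h00, h01⟩ := h.exists_apply_eq
  obtain ⟨y, hy, hdiag⟩ := hρ.exists_diagonal_map_eq_one hv
  rw [rowSymbol_eq_map hρ h00 h01, rowSymbol_eq_map hρ (x := y * x * y), map_mul, map_mul, hy,
    one_mul, mul_one]
  · simp only [Subgroup.coe_mul, SL2_mul_apply, h00, h01, hdiag, of_apply, cons_val]
    ring
  · simp only [Subgroup.coe_mul, SL2_mul_apply, h00, h01, hdiag, of_apply, cons_val]
    linear_combination b * v.mul_inv

end RowSymbol

/-! ### Periods and prime numbers -/

section Periods

theorem periodic_of_forall_prime {C : Type*} {f : ℕ → C} {E : ℕ}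
    (h : ∀ r : ℕ, r.Prime → ∃ P, f.Periodic P ∧ ∀ k, r ^ k ∣ P → r ^ k ∣ E) : f.Periodic E := by
  set shift : (ℕ → C) → ℕ → C := fun g i ↦ g (i + 1)
  have hiter : ∀ P, shift^[P] f = fun i ↦ f (i + P) := by
    intro P
    induction P with
    | zero => rfl
    | succ P ih =>
      funext i
      rw [Function.iterate_succ_apply', ih, ← add_assoc, add_right_comm]
  have hperiodic : ∀ P, Function.IsPeriodicPt shift P f ↔ f.Periodic P := fun P ↦ by
    rw [Function.IsPeriodicPt, Function.IsFixedPt, hiter, funext_iff, Function.Periodic]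
  suffices hdvd : Function.minimalPeriod shift f ∣ E from
    (hperiodic E).1 ((Function.isPeriodicPt_iff_minimalPeriod_dvd).2 hdvd)
  rw [Nat.dvd_iff_prime_pow_dvd_dvd]
  intro r k hr hrk
  obtain ⟨P, hP, hPE⟩ := h r hr
  exact hPE k (hrk.trans ((hperiodic P).2 hP).minimalPeriod_dvd)

theorem exists_isCoprime_not_dvd_pow_sub_one {r D : ℕ} (hr : r.Prime) (hD : 0 < D)
    (hDr : D + 1 < r) : ∃ g : ℤ, IsCoprime g (r : ℤ) ∧ ¬ (r : ℤ) ∣ g ^ D - 1 := by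
  have : Fact r.Prime := ⟨hr⟩
  obtain ⟨y, hy⟩ : ∃ y : (ZMod r)ˣ, y ^ D ≠ 1 := by
    by_contra! hall
    have hcard := IsCyclic.card_pow_eq_one_le (α := (ZMod r)ˣ) hD
    rw [Finset.filter_true_of_mem (fun y _ ↦ hall y), Finset.card_univ,
      ZMod.card_units_eq_totient, Nat.totient_prime hr] at hcard
    omega
  refine ⟨((y : ZMod r).val : ℤ), Nat.isCoprime_iff_coprime.2 (ZMod.val_coe_unit_coprime y),
    fun hdvd ↦ hy (Units.ext ?_)⟩
  rw [← ZMod.intCast_zmod_eq_zero_iff_dvd] at hdvd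
  push_cast at hdvd ⊢
  rwa [ZMod.natCast_val, ZMod.cast_id, sub_eq_zero] at hdvd

section Dirichlet

variable {ι : Type*} [Finite ι] {m k : ι → ℤ}

/-- Dirichlet's theorem combined with the Chinese remainder theorem. -/
theorem exists_prime_gt_forall_dvd_sub (hm : Pairwise fun i j ↦ IsCoprime (m i) (m j))
    (hm0 : ∀ i, m i ≠ 0) (hk : ∀ i, IsCoprime (k i) (m i)) (B : ℕ) :
    ∃ l : ℕ, l.Prime ∧ B < l ∧ ∀ i, m i ∣ l - k i := by
  have := Fintype.ofFinite ι
  obtain ⟨z, hz⟩ := Ideal.exists_forall_sub_mem_ideal (I := fun i ↦ Ideal.span {m i})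
    (fun i j hij ↦ (Ideal.isCoprime_span_singleton_iff _ _).2 (hm hij)) k
  simp only [Ideal.mem_span_singleton] at hz
  have hcop : IsCoprime z (∏ i, m i) :=
    IsCoprime.prod_right fun i _ ↦ isCoprime_of_dvd_sub (hk i) (hz i)
  have hprod : ∏ i, m i ≠ 0 := Finset.prod_ne_zero_iff.2 fun i _ ↦ hm0 i
  obtain ⟨l, hBl, hl, hmod⟩ := Nat.forall_exists_prime_gt_and_zmodEq B
    (Int.natAbs_ne_zero.2 hprod) (hcop.of_isCoprime_of_dvd_right (Int.natAbs_dvd.2 dvd_rfl))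
  refine ⟨l, hl, hBl, fun i ↦ ?_⟩
  have hlz : m i ∣ l - z :=
    (Finset.dvd_prod_of_mem m (Finset.mem_univ i)).trans (Int.natAbs_dvd.1 hmod.symm.dvd)
  exact sub_add_sub_cancel (l : ℤ) z (k i) ▸ hlz.add (hz i)

/-- If the prime `r` divides none of the moduli, it can be added to them. -/
theorem exists_prime_gt_forall_dvd_sub_not_dvd_pow_sub_one
    (hm : Pairwise fun i j ↦ IsCoprime (m i) (m j)) (hm0 : ∀ i, m i ≠ 0)
    (hk : ∀ i, IsCoprime (k i) (m i)) {r D : ℕ} (hr : r.Prime) (hD : 0 < D)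
    (hDr : (∀ i, IsCoprime (m i) r) → D + 1 < r) (B : ℕ) :
    ∃ l : ℕ, l.Prime ∧ B < l ∧ (∀ i, m i ∣ l - k i) ∧
      ((∀ i, IsCoprime (m i) r) → ¬ (r : ℤ) ∣ (l : ℤ) ^ D - 1) := by
  by_cases hmr : ∀ i, IsCoprime (m i) r
  · obtain ⟨g, hgr, hg⟩ := exists_isCoprime_not_dvd_pow_sub_one hr hD (hDr hmr)
    obtain ⟨l, hl, hBl, hlm⟩ := exists_prime_gt_forall_dvd_sub
      (m := fun o : Option ι ↦ o.elim (r : ℤ) m) (k := fun o ↦ o.elim g k)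
      (by
        rintro (_ | i) (_ | j) hij
        · exact absurd rfl hij
        · exact (hmr j).symm
        · exact hmr i
        · exact hm fun h ↦ hij (congrArg some h))
      (Option.rec (Int.natCast_ne_zero.2 hr.ne_zero) hm0) (Option.rec hgr hk) B
    refine ⟨l, hl, hBl, fun i ↦ hlm (some i), fun _ hdvd ↦ hg ?_⟩
    have hsub := (hlm none).trans (sub_dvd_pow_sub_pow (l : ℤ) g D)
    exact sub_sub_sub_cancel_left (1 : ℤ) (g ^ D) (l ^ D) ▸ hdvd.sub hsub
  · obtain ⟨l, hl, hBl, hlm⟩ := exists_prime_gt_forall_dvd_sub hm hm0 hk B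
    exact ⟨l, hl, hBl, hlm, fun h ↦ absurd h hmr⟩

end Dirichlet

section FiniteAlgebra

variable {l : ℕ} [Fact l.Prime] {A : Type*} [CommRing A] [Algebra (ZMod l) A]
  [Module.Finite (ZMod l) A]

theorem pow_sub_one_mem_of_isPrime (P : Ideal A) [P.IsPrime] {x : A} (hx : IsUnit x) :
    x ^ (l ^ (Module.finrank (ZMod l) A).factorial - 1) - 1 ∈ P := by
  have : Finite A := Module.finite_of_finite (ZMod l)
  have := Finite.of_surjective _ (Ideal.Quotient.mk_surjective (I := P))
  have := Fintype.ofFinite (A ⧸ P)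
  let _ : Field (A ⧸ P) := (Finite.isField_of_domain (A ⧸ P)).toField
  have hcard : Fintype.card (A ⧸ P) = l ^ Module.finrank (ZMod l) (A ⧸ P) := by
    rw [Module.card_eq_pow_finrank (K := ZMod l), ZMod.card]
  have hfinrank : Module.finrank (ZMod l) (A ⧸ P) ∣ (Module.finrank (ZMod l) A).factorial :=
    Nat.dvd_factorial Module.finrank_pos
      (LinearMap.finrank_le_finrank_of_surjective
        (f := (Ideal.Quotient.mkₐ (ZMod l) P).toLinearMap) Ideal.Quotient.mk_surjective)
  obtain ⟨c, hc⟩ := hcard ▸ Nat.pow_sub_one_dvd_pow_sub_one l hfinrank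
  rw [← Ideal.Quotient.eq_zero_iff_mem, map_sub, map_pow, map_one, hc, pow_mul,
    FiniteField.pow_card_sub_one_eq_one _ (hx.map (Ideal.Quotient.mk P)).ne_zero, one_pow, sub_self]

theorem pow_finrank_eq_zero_of_isNilpotent {K B : Type*} [Field K] [CommRing B] [Algebra K B]
    [Module.Finite K B] {y : B} (hy : IsNilpotent y) : y ^ Module.finrank K B = 0 := by
  obtain ⟨m, hm⟩ := hy
  have hker := Module.End.ker_pow_le_ker_pow_finrank (LinearMap.mulLeft K y) m
  simp only [LinearMap.pow_mulLeft] at hker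
  simpa [hm] using @hker 1

/-- The power with exponent `l ^ d! - 1` lies in `1 + nilradical`, and the `l ^ d`-th power map is
trivial there. -/
theorem pow_eq_one_of_isUnit {x : A} (hx : IsUnit x) :
    x ^ (l ^ Module.finrank (ZMod l) A *
      (l ^ (Module.finrank (ZMod l) A).factorial - 1)) = 1 := by
  nontriviality A
  set d := Module.finrank (ZMod l) A
  have hnil : IsNilpotent (x ^ (l ^ d.factorial - 1) - 1) :=
    nilpotent_iff_mem_prime.2 fun P _ ↦ pow_sub_one_mem_of_isPrime P hx
  have hzero : (x ^ (l ^ d.factorial - 1) - 1) ^ l ^ d = 0 :=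
    pow_eq_zero_of_le (Nat.lt_pow_self (Fact.out : l.Prime).one_lt).le
      (pow_finrank_eq_zero_of_isNilpotent (K := ZMod l) hnil)
  have : CharP A l := charP_of_injective_algebraMap' (ZMod l) l
  rwa [sub_pow_char_pow, one_pow, sub_eq_zero, ← pow_mul, mul_comm] at hzero

end FiniteAlgebra

theorem natCast_dvd_pow_sub_one {F : Type*} [Field F] [NumberField F] {l : ℕ} (hl : l.Prime)
    {t : 𝓞 F} (ht : IsCoprime t (l : 𝓞 F)) :
    (l : 𝓞 F) ∣ t ^ (l ^ Module.finrank ℚ F * (l ^ (Module.finrank ℚ F).factorial - 1)) - 1 := by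
  have : Fact l.Prime := ⟨hl⟩
  set I := Ideal.span {(l : 𝓞 F)}
  have hcard : Nat.card (𝓞 F ⧸ I) = l ^ Module.finrank ℚ F := by
    rw [← RingOfIntegers.rank]
    exact Ideal.absNorm_span_natCast l
  have : Finite (𝓞 F ⧸ I) := Nat.finite_of_card_ne_zero (hcard ▸ pow_ne_zero _ hl.ne_zero)
  have : Nontrivial (𝓞 F ⧸ I) := Finite.one_lt_card_iff_nontrivial.1
    (hcard ▸ Nat.one_lt_pow Module.finrank_pos.ne' hl.one_lt)
  have : CharP (𝓞 F ⧸ I) l := (CharP.charP_iff_prime_eq_zero hl).2 <| by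
    rw [← map_natCast (Ideal.Quotient.mk I), Ideal.Quotient.eq_zero_iff_mem]
    exact Ideal.mem_span_singleton_self _
  let _ : Algebra (ZMod l) (𝓞 F ⧸ I) := ZMod.algebra _ l
  have hfinrank : Module.finrank (ZMod l) (𝓞 F ⧸ I) = Module.finrank ℚ F := by
    rw [Module.natCard_eq_pow_finrank (K := ZMod l), Nat.card_zmod] at hcard
    exact Nat.pow_right_injective hl.two_le hcard
  have hunit : IsUnit (Ideal.Quotient.mk I t) := by
    obtain ⟨a, b, hab⟩ := ht
    refine IsUnit.of_mul_eq_one (Ideal.Quotient.mk I a) ?_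
    rw [← map_mul, ← map_one (Ideal.Quotient.mk I), Ideal.Quotient.eq, Ideal.mem_span_singleton]
    exact ⟨-b, by linear_combination hab⟩
  have hpow := pow_eq_one_of_isUnit (l := l) hunit
  rwa [hfinrank, ← map_pow, ← map_one (Ideal.Quotient.mk I), Ideal.Quotient.eq,
    Ideal.mem_span_singleton] at hpow

section Valuation

variable {r q n l : ℤ} {M : ℕ}

theorem exists_pow_sub_one_eq_mul (l : ℤ) (M : ℕ) :
    ∃ y : ℤ, l ^ M - 1 = (l - 1) * (M + (l - 1) * y) := by
  obtain ⟨y, hy⟩ := Polynomial.powAddExpansion 1 (l - 1) M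
  rw [add_sub_cancel, one_pow, one_pow] at hy
  exact ⟨y, by linear_combination hy⟩

theorem pow_dvd_of_pow_dvd_pow_sub_one_of_dvd_level (hM : (M : ℤ) ∣ q) (hrq : r ∣ q) {w : ℤ}
    (hw : l - 1 = q ^ 2 * (1 + q * w)) {k : ℕ} (hk : r ^ k ∣ l ^ M - 1) : r ^ k ∣ q ^ 2 * M := by
  obtain ⟨y, hy⟩ := exists_pow_sub_one_eq_mul l M
  obtain ⟨q', rfl⟩ := hM
  obtain ⟨s, hs⟩ := hrq
  have hcop : ∀ z : ℤ, IsCoprime (r ^ k) (1 + M * q' * z) := fun z ↦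
    IsCoprime.pow_left ⟨-s * z, 1, by rw [hs]; ring⟩
  have hfactor : l ^ M - 1 = (M * q') ^ 2 * M *
      ((1 + M * q' * w) * (1 + M * q' * (q' * (1 + M * q' * w) * y))) := by
    rw [hy, hw]
    ring
  exact ((hcop w).mul_right (hcop _)).dvd_of_dvd_mul_right (hfactor ▸ hk)

theorem pow_dvd_of_pow_dvd_pow_sub_one_of_dvd (hrn : r ∣ n) (hrM : IsCoprime r M) {j : ℤ}
    (hj : l - 1 = n * j) (hjn : IsCoprime j n) {k : ℕ} (hk : r ^ k ∣ l ^ M - 1) : r ^ k ∣ n := by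
  obtain ⟨y, hy⟩ := exists_pow_sub_one_eq_mul l M
  have hrj : IsCoprime r j := (hjn.of_isCoprime_of_dvd_right hrn).symm
  have hrest : IsCoprime r (M + n * j * y) := by
    obtain ⟨s, rfl⟩ := hrn
    rw [mul_assoc, mul_assoc]
    exact hrM.add_mul_left_right _
  rw [hy, hj, mul_assoc] at hk
  exact ((hrj.mul_right hrest).pow_left).dvd_of_dvd_mul_right hk

theorem pow_dvd_of_pow_dvd_pow_sub_one (hr : Prime r) (hM : (M : ℤ) ∣ q) {w j : ℤ}
    (hw : l - 1 = q ^ 2 * (1 + q * w)) (hj : l - 1 = n * j) (hjn : IsCoprime j n)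
    (hnot : ¬ r ∣ q → ¬ r ∣ n → ¬ r ∣ l ^ M - 1) {k : ℕ} (hk : r ^ k ∣ l ^ M - 1) :
    r ^ k ∣ q ^ 2 * n * M := by
  by_cases hrq : r ∣ q
  · exact (pow_dvd_of_pow_dvd_pow_sub_one_of_dvd_level hM hrq hw hk).trans ⟨n, by ring⟩
  by_cases hrn : r ∣ n
  · have hrM : IsCoprime r M := hr.coprime_iff_not_dvd.2 fun hrM ↦ hrq (hrM.trans hM)
    exact (pow_dvd_of_pow_dvd_pow_sub_one_of_dvd hrn hrM hj hjn hk).trans ⟨q ^ 2 * M, by ring⟩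
  have hk0 : k = 0 := by
    by_contra hk0
    exact hnot hrq hrn ((dvd_pow_self r hk0).trans hk)
  simp [hk0]

end Valuation

end Periods

section PeriodOfSymbols

section CommRing

variable {R : Type*} [CommRing R] {q : R} {C : Type*} [Group C] {ρ : levelSubgroup q →* C}
  {t : R} {n : ℕ}

theorem IsLevelRow.pow_mul_right {a b : R} (h : IsLevelRow q a b) (hat : IsCoprime a t) (i : ℕ) :
    IsLevelRow q a (t ^ i * b) :=
  ⟨h.sq_dvd_sub_one, h.dvd.mul_left _, hat.pow_right.mul_right h.isCoprime⟩

theorem isCoprime_of_sq_dvd_sub_one_add {a : R} (ha : t ^ 2 ∣ a - (1 + t)) : IsCoprime a t := by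
  obtain ⟨s, hs⟩ := ha
  exact ⟨1, -1 - t * s, by linear_combination hs⟩

theorem IsCyclicModulus.ne_zero [CharZero R] (h : IsCyclicModulus t n) : t ≠ 0 := by
  rintro rfl
  exact h.pos.ne' (Nat.cast_eq_zero.1 (zero_dvd_iff.1 h.dvd_natCast))

theorem IsCyclicModulus.exists_sub_one_eq_mul [IsDomain R] [CharZero R] (h : IsCyclicModulus t n)
    {l : ℤ} (hl : t ^ 2 ∣ (l : R) - (1 + t)) : ∃ j : ℤ, l - 1 = n * j ∧ IsCoprime j n := by
  obtain ⟨s, hs⟩ := hl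
  obtain ⟨j, hj⟩ := h.dvd_of_dvd_intCast (l - 1)
    ⟨1 + t * s, by push_cast; linear_combination hs⟩
  refine ⟨j, hj, h.isCoprime_natCast ?_⟩
  obtain ⟨t', hn, _⟩ := h.exists_cofactor
  have hcast : (l : R) - 1 = t * t' * j := by
    rw [← hn]
    exact_mod_cast congrArg (Int.cast : ℤ → R) hj
  have hone : t' * j = 1 + t * s :=
    mul_left_cancel₀ h.ne_zero (by linear_combination hs - hcast)
  exact ⟨t', -s, by linear_combination hone⟩

theorem IsCyclicModulus.pow_dvd_intCast_sub (h : IsCyclicModulus t n) {a : R} {k l : ℤ} {i : ℕ}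
    (hk : t ^ i ∣ a - k) (hl : (n : ℤ) ^ i ∣ l - k) : t ^ i ∣ (l : R) - a := by
  have hcast : (n : R) ^ i ∣ (l : R) - k := by simpa using Int.cast_dvd_cast (α := R) _ _ hl
  exact sub_sub_sub_cancel_right (l : R) a k ▸
    ((pow_dvd_pow_of_dvd h.dvd_natCast i).trans hcast).sub hk

theorem IsCyclicModulus.isCoprime_of_coprime (h : IsCyclicModulus t n) {s : R} {m : ℕ}
    (hs : IsCyclicModulus s m) (hnm : n.Coprime m) : IsCoprime t s := by
  have hns : IsCoprime (n : R) s := by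
    simpa using hs.isCoprime_intCast (Nat.isCoprime_iff_coprime.2 hnm)
  exact hns.of_isCoprime_of_dvd_left h.dvd_natCast

/-- The exponent `e` depends on neither of the two rows: a suitable unit `v` makes `v ^ 2 * a`
congruent to `l` modulo `t ^ i` for as large an `i` as needed. -/
theorem exists_pow_forall_rowSymbol_eq [IsDomain R] [CharZero R] [Ring.HasFiniteQuotients R]
    (hρ : KillsElementary ρ) (hq : q ≠ 0) {u : Rˣ} (hu : ¬ IsOfFinOrder u)
    (ht : IsCyclicModulus t n) (hqt : IsCoprime q t) {β : R} (hβ : β ≠ 0) (hqβ : IsCoprime q β)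
    (htβ : IsCoprime t β) :
    ∃ e, ∀ (a l : R) (i : ℕ), IsCoprime a t → IsLevelRow q a (t ^ i * (q * β)) → q ^ 2 ∣ l - 1 →
      t ^ e ∣ l - a → β ∣ l - a → IsLevelRow q l (t ^ i * (q * β)) ∧
        rowSymbol ρ l (t ^ i * (q * β)) = rowSymbol ρ a (t ^ i * (q * β)) := by
  obtain ⟨e, he⟩ := ht.exists_unit_pow_dvd_sq_mul_sub hu (mul_ne_zero (pow_ne_zero 2 hq) hβ)
  refine ⟨e, fun a l i hat hrow hlq hlt hlβ ↦ ?_⟩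
  obtain ⟨v, hvQ, hvt⟩ := he i a l hat hlt
  have hvq : q ^ 2 ∣ (v : R) - 1 := (Dvd.intro _ rfl).trans hvQ
  have hrow' := hrow.unit_sq_mul hvq
  have hq' : q ^ 2 ∣ l - (v : R) ^ 2 * a :=
    sub_sub_sub_cancel_right l ((v : R) ^ 2 * a) 1 ▸ hlq.sub hrow'.sq_dvd_sub_one
  have hβ' : β ∣ l - (v : R) ^ 2 * a := by
    have hsplit : l - (v : R) ^ 2 * a = (l - a) - (v - 1) * ((v + 1) * a) := by ring
    exact hsplit ▸ hlβ.sub (((Dvd.intro_left _ rfl).trans hvQ).mul_right _)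
  have hdvd : q * (t ^ i * (q * β)) ∣ l - (v : R) ^ 2 * a := by
    have hmul := (hqβ.pow_left.mul_left htβ.pow_left).mul_dvd
      ((hqt.pow (m := 2) (n := i)).mul_dvd hq' (dvd_sub_comm.1 hvt)) hβ'
    exact (by ring : q * (t ^ i * (q * β)) = q ^ 2 * t ^ i * β) ▸ hmul
  exact ⟨hrow'.congr_left hdvd,
    (rowSymbol_congr_left hρ hrow' hdvd).trans (rowSymbol_unit_sq_mul hρ hrow hvq)⟩

end CommRing

variable {F : Type*} [Field F] [NumberField F]

variable (F) in
/-- The divisibility conditions imposed on the level `q`: every prime not dividing `q` exceeds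
`[F : ℚ]! + 1`, and `4` divides `q`. -/
structure IsAdmissibleLevel (q : ℕ) : Prop where
  pos : 0 < q
  factorial_dvd : ((Module.finrank ℚ F).factorial + 1).factorial ∣ q
  four_dvd : 4 ∣ q

namespace IsAdmissibleLevel

variable {q : ℕ} (hq : IsAdmissibleLevel F q)
include hq

theorem prime_dvd {r : ℕ} (hr : r.Prime) (hle : r ≤ (Module.finrank ℚ F).factorial + 1) : r ∣ q :=
  (hr.dvd_factorial.2 hle).trans hq.factorial_dvd

theorem finrank_factorial_dvd : (Module.finrank ℚ F).factorial ∣ q :=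
  (Nat.dvd_factorial (Nat.factorial_pos _) (Nat.le_succ _)).trans hq.factorial_dvd

theorem natCast_ne_zero : (q : 𝓞 F) ≠ 0 :=
  Nat.cast_ne_zero.2 hq.pos.ne'

theorem ne_zero_of_sq_dvd_sub_one {a : 𝓞 F} (ha : (q : 𝓞 F) ^ 2 ∣ a - 1) : a ≠ 0 := by
  rintro rfl
  rw [zero_sub, dvd_neg] at ha
  have hnorm := map_dvd (Algebra.norm ℤ) ((dvd_pow_self (q : 𝓞 F) two_ne_zero).trans ha)
  rw [Algebra.norm_natCast, map_one, RingOfIntegers.rank] at hnorm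
  have hq1 : (q : ℤ) ∣ 1 := (dvd_pow_self _ Module.finrank_pos.ne').trans hnorm
  exact absurd (hq.four_dvd.trans (by exact_mod_cast hq1)) (by decide)

end IsAdmissibleLevel

variable (F) in
/-- The exponent `E` for which multiplying the second entry of a row by `t ^ E` does not change its
symbol, when `t` is a cyclic modulus with quotient `ℤ ⧸ n`; see
`rowSymbol_pow_periodExponent_mul`. -/
noncomputable def periodExponent (q n : ℕ) : ℕ :=
  q ^ 2 * n * (Module.finrank ℚ F).factorial

variable {q n m r : ℕ} {t β : 𝓞 F}

/-- The conditions modulo `q ^ 3` and modulo `r` control the `r`-part of `l ^ D - 1`; see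
`pow_dvd_of_pow_dvd_pow_sub_one`. -/
theorem exists_prime_gt_dvd_sub_dvd_sub {q n m r D : ℕ} (hq : q ≠ 0) (hn : n ≠ 0) (hm : m ≠ 0)
    (hmn : m.Coprime n) (hmq : m.Coprime q) (hqn : q.Coprime n) (hr : r.Prime) (hmr : m.Coprime r)
    (hD : 0 < D) (hDr : ¬ r ∣ q → D + 1 < r) {k₁ k₂ : ℤ} (hk₁ : IsCoprime k₁ m)
    (hk₂ : IsCoprime k₂ n) (e : ℕ) :
    ∃ l : ℕ, l.Prime ∧ r < l ∧ (m : ℤ) ∣ l - k₁ ∧ (n : ℤ) ^ (e + 1) ∣ l - k₂ ∧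
      (∃ w : ℤ, (l : ℤ) - 1 = q ^ 2 * (1 + q * w)) ∧
      (¬ r ∣ q → ¬ r ∣ n → ¬ (r : ℤ) ∣ (l : ℤ) ^ D - 1) := by
  let M : Fin 3 → ℤ := ![m, n ^ (e + 1), q ^ 3]
  let K : Fin 3 → ℤ := ![k₁, k₂, 1 + q ^ 2]
  have hM : Pairwise fun i j ↦ IsCoprime (M i) (M j) := by
    rw [← Nat.isCoprime_iff_coprime] at hmn hmq hqn
    intro i j hij
    fin_cases i <;> fin_cases j
    exacts [absurd rfl hij, hmn.pow_right, hmq.pow_right, hmn.symm.pow_left, absurd rfl hij,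
      hqn.symm.pow, hmq.symm.pow_left, hqn.pow, absurd rfl hij]
  have hM0 : ∀ i, M i ≠ 0 := by simp [M, Fin.forall_fin_succ, hm, hn, hq]
  have hK : ∀ i, IsCoprime (K i) (M i) := by
    have hK₂ : IsCoprime (1 + (q : ℤ) ^ 2) ((q : ℤ) ^ 3) := IsCoprime.pow_right ⟨1, -q, by ring⟩
    exact Fin.forall_fin_succ.2 ⟨hk₁,
      Fin.forall_fin_two.2 ⟨IsCoprime.pow_right (n := e + 1) hk₂, hK₂⟩⟩
  have hMr (h : ∀ i, IsCoprime (M i) r) : ¬ r ∣ q := by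
    have hqr : IsCoprime (q : ℤ) r := (IsCoprime.pow_left_iff three_pos).1 (h 2)
    exact hr.coprime_iff_not_dvd.1 (Nat.isCoprime_iff_coprime.1 hqr.symm)
  obtain ⟨l, hl, hrl, hlM, hlr⟩ := exists_prime_gt_forall_dvd_sub_not_dvd_pow_sub_one hM hM0 hK hr
    hD (fun h ↦ hDr (hMr h)) r
  refine ⟨l, hl, hrl, hlM 0, hlM 1, ?_, fun hrq hrn ↦ hlr ?_⟩
  · obtain ⟨w, hw⟩ : (q : ℤ) ^ 3 ∣ l - (1 + q ^ 2) := hlM 2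
    exact ⟨w, by linear_combination hw⟩
  · rw [← hr.coprime_iff_not_dvd, Nat.coprime_comm, ← Nat.isCoprime_iff_coprime] at hrq hrn
    exact Fin.forall_fin_succ.2
      ⟨Nat.isCoprime_iff_coprime.2 hmr, Fin.forall_fin_two.2 ⟨hrn.pow_left, hrq.pow_left⟩⟩

theorem exists_prime_dvd_sub (hq : IsAdmissibleLevel F q) (ht : IsCyclicModulus t n)
    (hβ : IsCyclicModulus β m) (hqn : q.Coprime n) (hr : r.Prime) (hm : m.Coprime (r * (q * n)))
    {a : 𝓞 F} (hat : IsCoprime a t) (haβ : IsCoprime a β) (e : ℕ) :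
    ∃ l : ℕ, l.Prime ∧ r < l ∧ β ∣ (l : 𝓞 F) - a ∧ t ^ e ∣ (l : 𝓞 F) - a ∧
      (∃ w : ℤ, (l : ℤ) - 1 = q ^ 2 * (1 + q * w)) ∧
      (¬ r ∣ q → ¬ r ∣ n →
        ¬ (r : ℤ) ∣ (l : ℤ) ^ (Module.finrank ℚ F).factorial - 1) := by
  obtain ⟨hmr, hmq, hmn⟩ : m.Coprime r ∧ m.Coprime q ∧ m.Coprime n := by
    simpa only [Nat.coprime_mul_iff_right] using hm
  obtain ⟨k₁, hk₁⟩ := hβ.exists_int_pow_dvd_sub 1 a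
  obtain ⟨k₂, hk₂⟩ := ht.exists_int_pow_dvd_sub (e + 1) a
  have hk₁m : IsCoprime k₁ m := hβ.isCoprime_natCast
    (isCoprime_of_dvd_sub haβ (dvd_sub_comm.1 (by simpa using hk₁)))
  have hk₂n : IsCoprime k₂ n := ht.isCoprime_natCast
    (isCoprime_of_dvd_sub hat (dvd_sub_comm.1 ((dvd_pow_self t e.succ_ne_zero).trans hk₂)))
  obtain ⟨l, hl, hrl, hlm, hln, hlq, hlr⟩ := exists_prime_gt_dvd_sub_dvd_sub hq.pos.ne' ht.pos.ne'
    hβ.pos.ne' hmn hmq hqn hr hmr (Module.finrank ℚ F).factorial_pos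
    (fun hrq ↦ not_le.1 fun hle ↦ hrq (hq.prime_dvd hr hle)) hk₁m hk₂n e
  refine ⟨l, hl, hrl, ?_, (pow_dvd_pow t e.le_succ).trans ?_, hlq, hlr⟩
  · simpa using hβ.pow_dvd_intCast_sub hk₁ (l := l) (by simpa using hlm)
  · simpa using ht.pow_dvd_intCast_sub hk₂ hln

variable {C : Type*} [Group C] {ρ : levelSubgroup (q : 𝓞 F) →* C}

theorem periodic_rowSymbol_natCast (hρ : KillsElementary ρ) {l : ℕ} (hl : l.Prime) {b : 𝓞 F}
    (htl : IsCoprime t (l : 𝓞 F)) (h : ∀ i, IsLevelRow (q : 𝓞 F) l (t ^ i * b)) :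
    Function.Periodic (fun i ↦ rowSymbol ρ l (t ^ i * b))
      (l ^ Module.finrank ℚ F * (l ^ (Module.finrank ℚ F).factorial - 1)) := by
  intro i
  refine rowSymbol_congr_right hρ (h i) ?_
  have hq : (q : 𝓞 F) ∣ t ^ i * b := (h i).dvd
  obtain ⟨s, hs⟩ := natCast_dvd_pow_sub_one hl htl
  obtain ⟨c, hc⟩ := hq
  rw [pow_add]
  exact ⟨c * s, by linear_combination (t ^ i * b) * hs + l * s * hc⟩

theorem pow_dvd_periodExponent (hq : IsAdmissibleLevel F q) (ht : IsCyclicModulus t n)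
    (hr : r.Prime) {l : ℕ} (hl : l.Prime) (hrl : r < l) (hlt : t ^ 2 ∣ (l : 𝓞 F) - (1 + t))
    (hw : ∃ w : ℤ, (l : ℤ) - 1 = q ^ 2 * (1 + q * w))
    (hlr : ¬ r ∣ q → ¬ r ∣ n → ¬ (r : ℤ) ∣ (l : ℤ) ^ (Module.finrank ℚ F).factorial - 1) {k : ℕ}
    (hk : r ^ k ∣ l ^ Module.finrank ℚ F * (l ^ (Module.finrank ℚ F).factorial - 1)) :
    r ^ k ∣ periodExponent F q n := by
  obtain ⟨w, hw⟩ := hw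
  obtain ⟨j, hj, hjn⟩ := ht.exists_sub_one_eq_mul (l := l) (by simpa using hlt)
  have hrk : r ^ k ∣ l ^ (Module.finrank ℚ F).factorial - 1 :=
    (((Nat.coprime_primes hr hl).2 hrl.ne).pow _ _).dvd_of_dvd_mul_left hk
  have hrk' : (r : ℤ) ^ k ∣ (l : ℤ) ^ (Module.finrank ℚ F).factorial - 1 := by
    have hcast := Int.natCast_dvd_natCast.2 hrk
    rwa [Nat.cast_sub (Nat.one_le_pow _ _ hl.pos), Nat.cast_pow, Nat.cast_pow, Nat.cast_one]
      at hcast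
  have hdvd := pow_dvd_of_pow_dvd_pow_sub_one (Nat.prime_iff_prime_int.1 hr)
    (Int.natCast_dvd_natCast.2 hq.finrank_factorial_dvd) hw hj hjn
    (by simpa only [Int.natCast_dvd_natCast] using hlr) hrk'
  rw [periodExponent]
  exact_mod_cast hdvd

theorem exists_periodic_rowSymbol_mul (hq : IsAdmissibleLevel F q) {u : (𝓞 F)ˣ}
    (hu : ¬ IsOfFinOrder u) (hρ : KillsElementary ρ) (ht : IsCyclicModulus t n)
    (hqt : IsCoprime (q : 𝓞 F) t) (hβ : IsCyclicModulus β m) {a : 𝓞 F}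
    (h : IsLevelRow (q : 𝓞 F) a (q * β)) (ha : t ^ 2 ∣ a - (1 + t)) (hr : r.Prime)
    (hm : m.Coprime (r * (q * n))) :
    ∃ P, Function.Periodic (fun i ↦ rowSymbol ρ a (t ^ i * (q * β))) P ∧
      ∀ k, r ^ k ∣ P → r ^ k ∣ periodExponent F q n := by
  have hqn : q.Coprime n := Nat.isCoprime_iff_coprime.1
    (ht.isCoprime_natCast (by simpa using hqt))
  obtain ⟨-, hmq, hmn⟩ : m.Coprime r ∧ m.Coprime q ∧ m.Coprime n := by
    simpa only [Nat.coprime_mul_iff_right] using hm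
  have hqβ : IsCoprime (q : 𝓞 F) β := by
    simpa using hβ.isCoprime_intCast (Nat.isCoprime_iff_coprime.2 hmq.symm)
  have hat := isCoprime_of_sq_dvd_sub_one_add ha
  obtain ⟨e, he⟩ := exists_pow_forall_rowSymbol_eq hρ hq.natCast_ne_zero hu ht hqt hβ.ne_zero hqβ
    (ht.isCoprime_of_coprime hβ hmn.symm)
  obtain ⟨l, hl, hrl, hlβ, hlt, hw, hlr⟩ := exists_prime_dvd_sub hq ht hβ hqn hr hm hat
    h.isCoprime.of_mul_right_right (e + 2)
  have hlq : (q : 𝓞 F) ^ 2 ∣ (l : 𝓞 F) - 1 := by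
    obtain ⟨w, hw⟩ := hw
    simpa using Int.cast_dvd_cast (α := 𝓞 F) _ _ (Dvd.intro _ hw.symm)
  have hrow (i) := he a l i hat (h.pow_mul_right hat i) hlq
    ((pow_dvd_pow t (e.le_add_right 2)).trans hlt) hlβ
  have hlt2 : t ^ 2 ∣ (l : 𝓞 F) - (1 + t) :=
    sub_add_sub_cancel (l : 𝓞 F) a (1 + t) ▸
      ((pow_dvd_pow t (Nat.le_add_left 2 e)).trans hlt).add ha
  refine ⟨_, ?_, fun k ↦ pow_dvd_periodExponent hq ht hr hl hrl hlt2 hw hlr⟩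
  simpa only [(hrow _).2] using
    periodic_rowSymbol_natCast hρ hl (isCoprime_of_sq_dvd_sub_one_add hlt2).symm fun i ↦ (hrow i).1

theorem exists_periodic_rowSymbol (hq : IsAdmissibleLevel F q) {u : (𝓞 F)ˣ}
    (hu : ¬ IsOfFinOrder u) (hρ : KillsElementary ρ) (ht : IsCyclicModulus t n)
    (hqt : IsCoprime (q : 𝓞 F) t) {a b : 𝓞 F} (h : IsLevelRow (q : 𝓞 F) a b)
    (ha : t ^ 2 ∣ a - (1 + t)) (hr : r.Prime) :
    ∃ P, Function.Periodic (fun i ↦ rowSymbol ρ a (t ^ i * b)) P ∧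
      ∀ k, r ^ k ∣ P → r ^ k ∣ periodExponent F q n := by
  obtain ⟨b, rfl⟩ := h.dvd
  obtain ⟨β, m, hβ, ⟨s, hs⟩, hm⟩ := exists_isCyclicModulus_dvd_sub h.isCoprime.of_mul_right_right
    (hq.ne_zero_of_sq_dvd_sub_one h.sq_dvd_sub_one)
    (mul_ne_zero hr.ne_zero (mul_ne_zero hq.pos.ne' ht.pos.ne'))
  have hat := isCoprime_of_sq_dvd_sub_one_add ha
  have hsymbol (i : ℕ) : rowSymbol ρ a (t ^ i * (q * β)) = rowSymbol ρ a (t ^ i * (q * b)) :=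
    rowSymbol_congr_right hρ (h.pow_mul_right hat i)
      ⟨t ^ i * s, by linear_combination (t ^ i * q) * hs⟩
  have hβrow : IsLevelRow (q : 𝓞 F) a (q * β) :=
    h.congr_right ⟨s, by linear_combination (q : 𝓞 F) * hs⟩
  simpa only [hsymbol] using exists_periodic_rowSymbol_mul hq hu hρ ht hqt hβ hβrow ha hr hm

theorem rowSymbol_pow_periodExponent_mul (hq : IsAdmissibleLevel F q) {u : (𝓞 F)ˣ}
    (hu : ¬ IsOfFinOrder u) (hρ : KillsElementary ρ) (ht : IsCyclicModulus t n)
    (hqt : IsCoprime (q : 𝓞 F) t) {a b : 𝓞 F} (h : IsLevelRow (q : 𝓞 F) a b)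
    (ha : t ^ 2 ∣ a - (1 + t)) :
    rowSymbol ρ a (t ^ periodExponent F q n * b) = rowSymbol ρ a b := by
  have hper := periodic_of_forall_prime (f := fun i ↦ rowSymbol ρ a (t ^ i * b))
    (fun r hr ↦ exists_periodic_rowSymbol hq hu hρ ht hqt h ha hr) 0
  simpa using hper

end PeriodOfSymbols

/-! ### Conjugation and commutativity -/

section ConjugationInvariance

variable {R : Type*} [CommRing R] {q : R} {C : Type*} [Group C] {ρ : levelSubgroup q →* C} {t : R}
  {e : ℕ}

/-- Multiplying the second entry of a row by `t ^ k` does not change its symbol, provided that the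
first entry is congruent to `1 + t` modulo `t ^ 2`. -/
def IsPowInvariant (ρ : levelSubgroup q →* C) (t : R) (k : ℕ) : Prop :=
  ∀ ⦃a b : R⦄, IsLevelRow q a b → t ^ 2 ∣ a - (1 + t) →
    rowSymbol ρ a (t ^ k * b) = rowSymbol ρ a b

/-- Conjugation by `diag(t ^ k, 1)`. -/
theorem exists_levelSubgroup_pow_mul (hqt : IsCoprime q t) {k : ℕ} (x : levelSubgroup q)
    (hx : t ^ k ∣ x.1 1 0) :
    ∃ y : levelSubgroup q, y.1 0 0 = x.1 0 0 ∧ y.1 0 1 = t ^ k * x.1 0 1 ∧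
      x.1 1 0 = t ^ k * y.1 1 0 ∧ y.1 1 1 = x.1 1 1 := by
  obtain ⟨c, hc⟩ := hx
  have hdet : x.1 0 0 * x.1 1 1 - t ^ k * x.1 0 1 * c = 1 := by
    linear_combination SL2_det_eq_one x.1 + x.1 0 1 * hc
  have hqc : q ∣ c := (hqt.pow_right (n := k)).dvd_of_dvd_mul_left (hc ▸ x.2.2.1)
  exact ⟨⟨mkSL2 _ _ _ _ hdet, mem_levelSubgroup_of_dvd (x.2.1.mul_left _) hqc x.2.2.2.1⟩,
    rfl, rfl, hc, rfl⟩

/-- The matrix `x₁` is the conjugate of `x` by the elementary matrix with upper right entry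
`z / t`. -/
theorem exists_semiconjBy_upper (hqt : IsCoprime q t) {z : R} (hz : q ∣ z)
    (x : levelSubgroup q) (hx10 : t ^ 2 ∣ x.1 1 0) (hx00 : t ∣ x.1 0 0 - 1) :
    ∃ x₁ : levelSubgroup q, SemiconjBy !![t, z; 0, t] x.1.1 x₁.1.1 := by
  obtain ⟨z, rfl⟩ := hz
  obtain ⟨c, hc⟩ := hx10
  obtain ⟨m, hm⟩ := hx00
  have hxdet := SL2_det_eq_one x.1
  obtain ⟨δ, hδ⟩ : t ∣ x.1 1 1 - x.1 0 0 :=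
    ⟨x.1 0 1 * t * c - (x.1 1 1 + 1) * m, by
      linear_combination hxdet + x.1 0 1 * hc - (x.1 1 1 + 1) * hm⟩
  have hdet : (x.1 0 0 + q * z * t * c) * (x.1 1 1 - q * z * t * c) -
      (x.1 0 1 + q * z * δ - (q * z) ^ 2 * c) * x.1 1 0 = 1 := by
    linear_combination hxdet + (q * z * t * c) * hδ + ((q * z) ^ 2 * c - q * z * δ) * hc
  have hqc : q ∣ c := (hqt.pow_right (n := 2)).dvd_of_dvd_mul_left (hc ▸ x.2.2.1)
  refine ⟨⟨mkSL2 _ _ _ _ hdet, mem_levelSubgroup_of_dvd ?_ x.2.2.1 ?_⟩, ?_⟩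
  · exact (x.2.1.add ⟨z * δ, by ring⟩).sub ⟨q * z ^ 2 * c, by ring⟩
  · obtain ⟨c, rfl⟩ := hqc
    simp only [mkSL2_zero_zero]
    exact add_sub_right_comm (x.1 0 0) _ 1 ▸ x.2.2.2.1.add ⟨z * t * c, by ring⟩
  · ext i j
    fin_cases i <;> fin_cases j <;>
      simp only [Matrix.mul_apply, Fin.sum_univ_two, Fin.isValue, Fin.zero_eta, Fin.mk_one,
        of_apply, cons_val', cons_val_zero, cons_val_one, cons_val_fin_one, mkSL2]
    · linear_combination q * z * hc
    · linear_combination q * z * hδ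
    · ring
    · linear_combination -q * z * hc

/-- Conjugation by `diag(t ^ (e + 3), 1)` turns `z / t` into the multiple `t ^ (e + 2) * z` of
`q`. -/
theorem IsPowInvariant.map_eq_of_semiconjBy_upper [IsDomain R] (hρ : KillsElementary ρ)
    (hinv : IsPowInvariant ρ t (e + 3)) (ht0 : t ≠ 0) (hqt : IsCoprime q t) {z : R} (hz : q ∣ z)
    {x x₁ : levelSubgroup q} (hx : SemiconjBy !![t, z; 0, t] x.1.1 x₁.1.1)
    (hx10 : t ^ (e + 3) ∣ x.1 1 0) (hx00 : t ^ 2 ∣ x.1 0 0 - (1 + t)) : ρ x₁ = ρ x := by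
  obtain ⟨z, rfl⟩ := hz
  obtain ⟨y, hy00, hy01, hy10, hy11⟩ := exists_levelSubgroup_pow_mul hqt x hx10
  have h00 : t * x.1 0 0 + q * z * x.1 1 0 = x₁.1 0 0 * t := by
    simpa [Matrix.mul_apply, Fin.sum_univ_two] using congrFun₂ hx.eq 0 0
  have h01 : t * x.1 0 1 + q * z * x.1 1 1 = x₁.1 0 0 * (q * z) + x₁.1 0 1 * t := by
    simpa [Matrix.mul_apply, Fin.sum_univ_two] using congrFun₂ hx.eq 0 1
  have h00' : x₁.1 0 0 = x.1 0 0 + q * z * t ^ (e + 2) * y.1 1 0 :=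
    mul_left_cancel₀ ht0 (by linear_combination q * z * hy10 - h00)
  have hx₁00 : t ^ 2 ∣ x₁.1 0 0 - (1 + t) := by
    obtain ⟨m, hm⟩ := hx00
    exact ⟨m + q * z * t ^ e * y.1 1 0, by linear_combination h00' + hm⟩
  calc ρ x₁ = rowSymbol ρ (x₁.1 0 0) (t ^ (e + 3) * x₁.1 0 1) :=
        (map_eq_rowSymbol hρ x₁).trans (hinv (isLevelRow_apply x₁) hx₁00).symm
    _ = ρ (upperElementary q (z * t ^ (e + 2)) * y * upperElementary q (-(z * t ^ (e + 2)))) := by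
        refine rowSymbol_eq_map hρ ?_ ?_ <;>
          simp only [Subgroup.coe_mul, SL2_mul_apply, upperElementary, mkSL2_zero_zero,
            mkSL2_zero_one, mkSL2_one_zero, mkSL2_one_one, hy00, hy01, hy11]
        · linear_combination -h00'
        · linear_combination t ^ (e + 2) * h01 + q * z * t ^ (e + 2) * h00'
    _ = ρ y := by simp [hρ.upper]
    _ = ρ x := (rowSymbol_eq_map hρ hy00 hy01).symm.trans
        ((hinv (isLevelRow_apply x) hx00).trans (map_eq_rowSymbol hρ x).symm)

theorem IsPowInvariant.map_eq_of_semiconjBy_lower [IsDomain R] (hρ : KillsElementary ρ)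
    (hinv : IsPowInvariant ρ t (e + 3)) (ht0 : t ≠ 0) (hqt : IsCoprime q t) {w : R} (hw : q ∣ w)
    {x x₁ : levelSubgroup q} (hx : SemiconjBy !![t, 0; w, t] x.1.1 x₁.1.1)
    (hx01 : t ^ (e + 3) ∣ x₁.1 0 1) (hx00 : t ^ 2 ∣ x₁.1 0 0 - (1 + t)) : ρ x₁ = ρ x := by
  obtain ⟨w, rfl⟩ := hw
  obtain ⟨b, hb⟩ := hx01
  have h01 : x.1 0 1 = x₁.1 0 1 := mul_left_cancel₀ ht0 <| by
    simpa [Matrix.mul_apply, Fin.sum_univ_two, mul_comm] using congrFun₂ hx.eq 0 1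
  have h00 : t * x.1 0 0 = x₁.1 0 0 * t + x₁.1 0 1 * (q * w) := by
    simpa [Matrix.mul_apply, Fin.sum_univ_two] using congrFun₂ hx.eq 0 0
  have h00' : x.1 0 0 = x₁.1 0 0 + q * w * t ^ (e + 2) * b :=
    mul_left_cancel₀ ht0 (by linear_combination h00 + q * w * hb)
  have hrow : IsLevelRow q (x₁.1 0 0) b := by
    have h := isLevelRow_apply x₁
    rw [hb] at h
    exact ⟨h.sq_dvd_sub_one, (hqt.pow_right (n := e + 3)).dvd_of_dvd_mul_left h.dvd,
      h.isCoprime.of_mul_right_right⟩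
  have hdvd : q * b ∣ x.1 0 0 - x₁.1 0 0 := ⟨w * t ^ (e + 2), by linear_combination h00'⟩
  have hx00' : t ^ 2 ∣ x.1 0 0 - (1 + t) := by
    obtain ⟨m, hm⟩ := hx00
    exact ⟨m + q * w * t ^ e * b, by linear_combination h00' + hm⟩
  rw [map_eq_rowSymbol hρ x, map_eq_rowSymbol hρ x₁, h01, hb, hinv hrow hx00,
    hinv (hrow.congr_left hdvd) hx00', rowSymbol_congr_left hρ hrow hdvd]

theorem smul_eq_mul_mul (B D : R) {s : R} (hs : t - 1 = q ^ 2 * s) :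
    t • !![t ^ 2, t * B; t * D, B * D + 1] =
      !![t, 0; D - q * s, t] * (!![t, q; q * s, 1] * !![t, B - q; 0, t]) := by
  ext i j
  fin_cases i <;> fin_cases j <;>
    simp only [Matrix.mul_apply, Fin.sum_univ_two, Fin.isValue, Fin.zero_eta, Fin.mk_one,
      of_apply, cons_val', cons_val_zero, cons_val_one, cons_val_fin_one,
      Matrix.smul_apply, smul_eq_mul]
  · ring
  · ring
  · ring
  · linear_combination -t * hs

theorem semiconjBy_of_mul_left {M : Type*} [Semigroup M] {a b x y z : M}
    (hb : IsRightRegular b) (hab : SemiconjBy (a * b) x z) (hxy : SemiconjBy b x y) :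
    SemiconjBy a y z :=
  hb <| by
    calc a * y * b = a * b * x := by rw [mul_assoc, ← hxy.eq, mul_assoc]
      _ = z * a * b := by rw [hab.eq, mul_assoc]

theorem semiconjBy_coe_conj (g h : levelSubgroup q) :
    SemiconjBy g.1.1 h.1.1 (g * h * g⁻¹).1.1 :=
  congrArg (fun k : levelSubgroup q ↦ k.1.1) (SemiconjBy.conj_mk g h).eq

/-- Up to a scalar, the matrix `(t ^ 2, t * B; t * D, B * D + 1)` of determinant `t ^ 2` is the
product of `E₂₁(w / t)`, `(t, q; q * s, 1)` and `E₁₂(z / t)`, where `w = D - q * s` and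
`z = B - q`. The middle factor is a product of elementary matrices. -/
theorem IsPowInvariant.map_eq_of_semiconjBy [IsDomain R] (hρ : KillsElementary ρ)
    (hinv : IsPowInvariant ρ t (e + 3)) (ht0 : t ≠ 0) (ht1 : q ^ 2 ∣ t - 1) {B D : R}
    (hB : q ∣ B) (hD : q ∣ D) {x x' : levelSubgroup q}
    (hx : SemiconjBy !![t ^ 2, t * B; t * D, B * D + 1] x.1.1 x'.1.1)
    (hx10 : t ^ (e + 3) ∣ x.1 1 0) (hx00 : t ^ 2 ∣ x.1 0 0 - (1 + t))
    (hx'01 : t ^ (e + 3) ∣ x'.1 0 1) (hx'00 : t ^ 2 ∣ x'.1 0 0 - (1 + t)) : ρ x' = ρ x := by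
  have hqt : IsCoprime q t := (isCoprime_of_sq_dvd_sub_one ht1).symm
  obtain ⟨s, hs⟩ := ht1
  have hz : q ∣ B - q := hB.sub dvd_rfl
  have hw : q ∣ D - q * s := hD.sub (Dvd.intro _ rfl)
  have ht_dvd : t ∣ x.1 0 0 - 1 := by
    obtain ⟨m, hm⟩ := hx00
    exact ⟨1 + t * m, by linear_combination hm⟩
  obtain ⟨x₁, hx₁⟩ := exists_semiconjBy_upper hqt hz x
    ((pow_dvd_pow t (by omega)).trans hx10) ht_dvd
  set P := upperElementary q 1 * lowerElementary q s with hP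
  have hPm : P.1.1 = !![t, q; q * s, 1] := by
    rw [eta_fin_two P.1.1]
    suffices 1 + q * (q * s) = t by
      simpa [hP, upperElementary, lowerElementary, SL2_mul_apply] using this
    linear_combination -hs
  have hlower : SemiconjBy !![t, 0; D - q * s, t] (P * x₁ * P⁻¹).1.1 x'.1.1 := by
    have hdet : (P.1.1 * !![t, B - q; 0, t]).det ≠ 0 := by simpa [det_fin_two_of] using ht0
    refine semiconjBy_of_mul_left
      (isRegular_of_isLeftRegular_det (IsRegular.of_ne_zero hdet).left).right ?_
      ((semiconjBy_coe_conj P x₁).mul_left hx₁)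
    rw [hPm, ← smul_eq_mul_mul B D hs, SemiconjBy, Matrix.smul_mul, Matrix.mul_smul, hx.eq]
  calc ρ x' = ρ (P * x₁ * P⁻¹) :=
        hinv.map_eq_of_semiconjBy_lower hρ ht0 hqt hw hlower hx'01 hx'00
    _ = ρ x₁ := by simp [hP, hρ.upper, hρ.lower]
    _ = ρ x := hinv.map_eq_of_semiconjBy_upper hρ ht0 hqt hz hx₁ hx10 hx00

end ConjugationInvariance

section Commutativity

section Conjugation

variable {R : Type*} [CommRing R]

/-- A row congruent to `(α, β)` modulo `T` is reached by elementary operations, and the lower left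
entry is then cleared modulo `T`. -/
theorem exists_map_eq_dvd_sub [Ring.HasFiniteQuotients R] {q : R} {C : Type*} [Group C]
    {ρ : levelSubgroup q →* C} (hρ : KillsElementary ρ) {T α : R} (hT : T ≠ 0)
    (hqT : IsCoprime q T) (hα : IsCoprime α T) (β : R) (x₀ : levelSubgroup q) :
    ∃ x : levelSubgroup q,
      ρ x = ρ x₀ ∧ T ∣ x.1 0 0 - α ∧ T ∣ x.1 0 1 - β ∧ T ∣ x.1 1 0 := by
  have h₀ := isLevelRow_apply x₀
  obtain ⟨b, hb⟩ := h₀.dvd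
  obtain ⟨y, hy⟩ := exists_isCoprime_add_mul (hb ▸ h₀.isCoprime).of_mul_right_right hT
  have hb₁ : q * x₀.1 0 0 ∣ q * (b + y * x₀.1 0 0) - x₀.1 0 1 :=
    ⟨y, by linear_combination -hb⟩
  have h₁ := h₀.congr_right hb₁
  obtain ⟨a, ha, haα⟩ :=
    exists_dvd_sub_and_dvd_sub (hqT.mul_left (hqT.mul_left hy)) (x₀.1 0 0) α
  have h₂ := h₁.congr_left ha
  have haT : IsCoprime a T := isCoprime_of_dvd_sub hα haα
  obtain ⟨c, hc, hcβ⟩ :=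
    exists_dvd_sub_and_dvd_sub (hqT.mul_left haT) (q * (b + y * x₀.1 0 0)) β
  obtain ⟨x, hx00, hx01, hx10⟩ := (h₂.congr_right hc).exists_dvd_lower haT
  refine ⟨x, ?_, by rwa [hx00], by rwa [hx01], hx10⟩
  rw [← rowSymbol_eq_map hρ hx00 hx01, rowSymbol_congr_right hρ h₂ hc,
    rowSymbol_congr_left hρ h₁ ha, rowSymbol_congr_right hρ h₀ hb₁, ← map_eq_rowSymbol hρ]

theorem dvd_conj_apply {T α : R} {y x : SpecialLinearGroup (Fin 2) R}
    (hα : T ∣ (1 + y 0 0) * α - 1) (h00 : T ∣ x 0 0 - (1 + y 0 0))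
    (h01 : T ∣ x 0 1 - y 0 1 * (α + 1)) (h10 : T ∣ x 1 0) :
    T ∣ (y * x * y⁻¹) 0 1 ∧ T ∣ (y * x * y⁻¹) 0 0 - (1 + y 0 0) := by
  obtain ⟨k, hk⟩ := hα
  obtain ⟨r, hr⟩ := h00
  obtain ⟨m, hm⟩ := h01
  obtain ⟨c, hc⟩ := h10
  have hydet := SL2_det_eq_one y
  obtain ⟨w, hw⟩ : T ∣ x 1 1 - α :=
    ⟨α * x 0 1 * c - k * x 1 1 - α * r * x 1 1, by
      linear_combination α * SL2_det_eq_one x - x 1 1 * hk + α * x 0 1 * hc - α * x 1 1 * hr⟩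
  constructor
  · have hentry : (y * x * y⁻¹) 0 1 =
        y 0 0 * (y 0 0 * x 0 1 + y 0 1 * (x 1 1 - x 0 0)) - y 0 1 ^ 2 * x 1 0 := by
      simp only [SL2_mul_apply, SL2_coe_inv, of_apply, cons_val]
      ring
    exact ⟨y 0 0 * (y 0 0 * m + y 0 1 * (w - r + k)) - y 0 1 ^ 2 * c, by
      linear_combination hentry + y 0 0 ^ 2 * hm + y 0 0 * y 0 1 * (hw - hr + hk) -
        y 0 1 ^ 2 * hc⟩
  · have hentry : (y * x * y⁻¹) 0 0 =
        y 1 1 * (y 0 0 * x 0 0 + y 0 1 * x 1 0) - y 1 0 * (y 0 0 * x 0 1 + y 0 1 * x 1 1) := by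
      simp only [SL2_mul_apply, SL2_coe_inv, of_apply, cons_val]
      ring
    exact ⟨y 1 1 * (y 0 0 * r + y 0 1 * c) - y 1 0 * (y 0 0 * m + y 0 1 * (w + k)), by
      linear_combination hentry + y 1 1 * (y 0 0 * hr + y 0 1 * hc) -
        y 1 0 * (y 0 0 * hm + y 0 1 * (hw + hk)) + (1 + y 0 0) * hydet⟩

theorem smul_coe_eq (y : SpecialLinearGroup (Fin 2) R) :
    y 0 0 • (y : Matrix (Fin 2) (Fin 2) R) =
      !![y 0 0 ^ 2, y 0 0 * y 0 1; y 0 0 * y 1 0, y 0 1 * y 1 0 + 1] := by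
  have h11 : y 0 0 * y 1 1 = y 0 1 * y 1 0 + 1 := by linear_combination SL2_det_eq_one y
  ext i j
  fin_cases i <;> fin_cases j <;> simp [h11, sq]

end Conjugation

variable {F : Type*} [Field F] [NumberField F] {q : ℕ} {u : (𝓞 F)ˣ} {C : Type*} [Group C]
  {ρ : levelSubgroup (q : 𝓞 F) →* C}

theorem IsAdmissibleLevel.three_le_periodExponent (hq : IsAdmissibleLevel F q) {n : ℕ}
    (hn : 0 < n) : 3 ≤ periodExponent F q n :=
  calc 3 ≤ q ^ 2 := by nlinarith [Nat.le_of_dvd hq.pos hq.four_dvd]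
    _ ≤ q ^ 2 * n := Nat.le_mul_of_pos_right _ hn
    _ ≤ periodExponent F q n := Nat.le_mul_of_pos_right _ (Nat.factorial_pos _)

theorem exists_isPowInvariant (hq : IsAdmissibleLevel F q) (hu : ¬ IsOfFinOrder u)
    (hρ : KillsElementary ρ) {t : 𝓞 F} {n : ℕ} (ht : IsCyclicModulus t n)
    (hqt : IsCoprime (q : 𝓞 F) t) : ∃ e, IsPowInvariant ρ t (e + 3) := by
  obtain ⟨e, he⟩ := Nat.exists_eq_add_of_le' (hq.three_le_periodExponent ht.pos)
  exact ⟨e, fun a b hab ha ↦ he ▸ rowSymbol_pow_periodExponent_mul hq hu hρ ht hqt hab ha⟩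

theorem map_conj_of_isCyclicModulus (hq : IsAdmissibleLevel F q) (hu : ¬ IsOfFinOrder u)
    (hρ : KillsElementary ρ) {n : ℕ} (y x₀ : levelSubgroup (q : 𝓞 F))
    (ht : IsCyclicModulus (y.1 0 0) n) : ρ y * ρ x₀ * (ρ y)⁻¹ = ρ x₀ := by
  have hqt : IsCoprime (q : 𝓞 F) (y.1 0 0) := (isCoprime_of_sq_dvd_sub_one y.2.2.2.1).symm
  obtain ⟨e, hinv⟩ := exists_isPowInvariant hq hu hρ ht hqt
  have hT : IsCoprime (1 + y.1 0 0) (y.1 0 0 ^ (e + 3)) :=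
    IsCoprime.pow_right ⟨1, -1, by ring⟩
  obtain ⟨α, k, hk⟩ := id hT
  obtain ⟨x, hx, hx00, hx01, hx10⟩ := exists_map_eq_dvd_sub hρ (pow_ne_zero (e + 3) ht.ne_zero)
    hqt.pow_right hT (y.1 0 1 * (α + 1)) x₀
  obtain ⟨hyx01, hyx00⟩ :=
    dvd_conj_apply ⟨-k, by linear_combination hk⟩ hx00 hx01 hx10
  have hsq : y.1 0 0 ^ 2 ∣ y.1 0 0 ^ (e + 3) := pow_dvd_pow _ (by omega)
  rw [← hx, ← map_inv, ← map_mul, ← map_mul]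
  refine hinv.map_eq_of_semiconjBy hρ ht.ne_zero y.2.2.2.1 y.2.1 y.2.2.1 ?_ hx10
    (hsq.trans hx00) hyx01 (hsq.trans hyx00)
  rw [← smul_coe_eq y.1, SemiconjBy, Matrix.smul_mul, Matrix.mul_smul, (semiconjBy_coe_conj y x).eq]

theorem exists_map_eq_isCyclicModulus_of_ne_zero (hq : IsAdmissibleLevel F q)
    (hρ : KillsElementary ρ) {y : levelSubgroup (q : 𝓞 F)} (hy : y.1 0 1 ≠ 0) :
    ∃ (y' : levelSubgroup (q : 𝓞 F)) (n : ℕ), ρ y' = ρ y ∧ IsCyclicModulus (y'.1 0 0) n := by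
  have hrow := isLevelRow_apply y
  obtain ⟨t, n, ht, ⟨w, hw⟩, -⟩ := exists_isCyclicModulus_dvd_sub
    ((isCoprime_of_sq_dvd_sub_one hrow.sq_dvd_sub_one).symm.mul_left hrow.isCoprime.symm)
    (mul_ne_zero hq.natCast_ne_zero hy) one_ne_zero
  refine ⟨y * lowerElementary _ w, n, by rw [map_mul, hρ.lower, mul_one], ?_⟩
  have h00 : (y * lowerElementary (q : 𝓞 F) w).1 0 0 = t := by
    simp only [Subgroup.coe_mul, SL2_mul_apply, lowerElementary, mkSL2_zero_zero, mkSL2_one_zero]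
    linear_combination -hw
  rwa [h00]

theorem exists_map_eq_isCyclicModulus (hq : IsAdmissibleLevel F q) (hρ : KillsElementary ρ)
    (y : levelSubgroup (q : 𝓞 F)) :
    ∃ (y' : levelSubgroup (q : 𝓞 F)) (n : ℕ), ρ y' = ρ y ∧ IsCyclicModulus (y'.1 0 0) n := by
  by_cases hy : y.1 0 1 = 0
  · have hupper : (y * upperElementary (q : 𝓞 F) 1).1 0 1 ≠ 0 := by
      simp only [Subgroup.coe_mul, SL2_mul_apply, upperElementary, mkSL2_zero_one, mkSL2_one_one,
        hy]
      simpa using ⟨hq.ne_zero_of_sq_dvd_sub_one y.2.2.2.1, hq.pos.ne'⟩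
    simpa [hρ.upper] using exists_map_eq_isCyclicModulus_of_ne_zero hq hρ hupper
  · exact exists_map_eq_isCyclicModulus_of_ne_zero hq hρ hy

theorem map_mul_comm (hq : IsAdmissibleLevel F q) (hu : ¬ IsOfFinOrder u)
    (hρ : KillsElementary ρ) (y x : levelSubgroup (q : 𝓞 F)) : ρ y * ρ x = ρ x * ρ y := by
  obtain ⟨y', n, hy', ht⟩ := exists_map_eq_isCyclicModulus hq hρ y
  exact mul_inv_eq_iff_eq_mul.1 (hy' ▸ map_conj_of_isCyclicModulus hq hu hρ y' x ht)

end Commutativity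

section DiagonalConjugation

variable {R : Type*} [CommRing R] {q t T : R}

theorem exists_pow_dvd_pow_sub_one [Ring.HasFiniteQuotients R] {a d : R} (hd : d ≠ 0)
    (h : IsCoprime a d) : ∃ k, 0 < k ∧ d ∣ a ^ k - 1 := by
  obtain ⟨i, m, hdvd⟩ := exists_dvd_pow_mul_one_sub_pow a hd
  exact ⟨m + 1, m.succ_pos, dvd_sub_comm.1 (h.symm.pow_right.dvd_of_dvd_mul_left hdvd)⟩

theorem dvd_pow_apply {x : SpecialLinearGroup (Fin 2) R} (h01 : T ∣ x 0 1) (h10 : T ∣ x 1 0)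
    (k : ℕ) : T ∣ (x ^ k) 0 1 ∧ T ∣ (x ^ k) 1 0 ∧ T ∣ (x ^ k) 0 0 - x 0 0 ^ k := by
  induction k with
  | zero => simp
  | succ k ih =>
    obtain ⟨ih01, ih10, ih00⟩ := ih
    simp only [pow_succ x, SL2_mul_apply]
    refine ⟨(h01.mul_left _).add (ih01.mul_right _), (ih10.mul_right _).add (h10.mul_left _), ?_⟩
    rw [pow_succ, add_sub_right_comm, ← sub_mul]
    exact (ih00.mul_right _).add (ih01.mul_right _)

theorem exists_semiconjBy_diagonal (hqt : IsCoprime q t) (x : levelSubgroup q)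
    (hx : t ^ 2 ∣ x.1 1 0) :
    ∃ x' : levelSubgroup q, x'.1 0 0 = x.1 0 0 ∧ x'.1 0 1 = t ^ 2 * x.1 0 1 ∧
      SemiconjBy !![t ^ 2, 0; 0, 1] x.1.1 x'.1.1 := by
  obtain ⟨x', h00, h01, h10, h11⟩ := exists_levelSubgroup_pow_mul hqt x hx
  refine ⟨x', h00, h01, ?_⟩
  rw [SemiconjBy, eta_fin_two x.1.1, eta_fin_two x'.1.1]
  simp [h00, h01, h10, h11, mul_comm]

variable {A : Type*} [CommGroup A] {ρ : levelSubgroup q →* A} {e : ℕ}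

theorem IsPowInvariant.map_eq_of_semiconjBy_diagonal [IsDomain R] (hρ : KillsElementary ρ)
    (hinv : IsPowInvariant ρ t (e + 3)) (ht0 : t ≠ 0) (ht1 : q ^ 2 ∣ t - 1)
    {x x' : levelSubgroup q} (hx : SemiconjBy !![t ^ 2, 0; 0, 1] x.1.1 x'.1.1)
    (hx01 : t ^ (e + 3) ∣ x.1 0 1) (hx10 : t ^ (e + 3) ∣ x.1 1 0)
    (hx00 : t ^ 2 ∣ x.1 0 0 - (1 + t)) : ρ x' = ρ x := by
  have h00 : x'.1 0 0 = x.1 0 0 := by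
    have heq : t ^ 2 * x.1 0 0 = x'.1 0 0 * t ^ 2 := by
      simpa [Matrix.mul_apply, Fin.sum_univ_two] using congrFun₂ hx.eq 0 0
    exact mul_left_cancel₀ (pow_ne_zero 2 ht0) (by rw [heq, mul_comm])
  have h01 : t ^ 2 * x.1 0 1 = x'.1 0 1 := by
    simpa [Matrix.mul_apply, Fin.sum_univ_two] using congrFun₂ hx.eq 0 1
  exact hinv.map_eq_of_semiconjBy hρ ht0 ht1 (dvd_zero q) (dvd_zero q) (by simpa using hx) hx10
    hx00 (h01 ▸ hx01.mul_left _) (by rwa [h00])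

/-- Some power of `x`, multiplied by a matrix `w` whose upper left entry is `1 + t`, has upper left
entry congruent to `1 + t` modulo `t ^ 2`. -/
theorem IsPowInvariant.map_eq_of_semiconjBy_diagonal_of_isCoprime [IsDomain R]
    [Ring.HasFiniteQuotients R] [IsMulTorsionFree A] (hρ : KillsElementary ρ)
    (hinv : IsPowInvariant ρ t (e + 3)) (ht0 : t ≠ 0) (ht1 : q ^ 2 ∣ t - 1)
    {x x' : levelSubgroup q} (hx : SemiconjBy !![t ^ 2, 0; 0, 1] x.1.1 x'.1.1)
    (hx01 : t ^ (e + 3) ∣ x.1 0 1) (hx10 : t ^ (e + 3) ∣ x.1 1 0)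
    (hx00 : IsCoprime (x.1 0 0) t) : ρ x' = ρ x := by
  have hqt : IsCoprime q t := (isCoprime_of_sq_dvd_sub_one ht1).symm
  have hsq : t ^ 2 ∣ t ^ (e + 3) := pow_dvd_pow t (by omega)
  obtain ⟨w, -, hw00, hw01, hw10⟩ := exists_map_eq_dvd_sub hρ (pow_ne_zero (e + 3) ht0)
    hqt.pow_right (IsCoprime.pow_right ⟨1, -1, by ring⟩ : IsCoprime (1 + t) _) 0 1
  rw [sub_zero] at hw01
  obtain ⟨w', -, -, hw⟩ := exists_semiconjBy_diagonal hqt w (hsq.trans hw10)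
  obtain ⟨k, hk, hxk⟩ := exists_pow_dvd_pow_sub_one (pow_ne_zero 2 ht0) (hx00.pow_right (n := 2))
  obtain ⟨hxk01, hxk10, hxk00⟩ := dvd_pow_apply hx01 hx10 k
  have hρw : ρ w' = ρ w :=
    hinv.map_eq_of_semiconjBy_diagonal hρ ht0 ht1 hw hw01 hw10 (hsq.trans hw00)
  have hρxw : ρ (x' ^ k * w') = ρ (x ^ k * w) := by
    refine hinv.map_eq_of_semiconjBy_diagonal hρ ht0 ht1 ((hx.pow_right k).mul_right hw) ?_ ?_ ?_
    all_goals simp only [Subgroup.coe_mul, Subgroup.coe_pow, SL2_mul_apply]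
    · exact (hw01.mul_left _).add (hxk01.mul_right _)
    · exact (hxk10.mul_right _).add (hw10.mul_left _)
    · have hsplit : (x.1 ^ k) 0 0 * w.1 0 0 + (x.1 ^ k) 0 1 * w.1 1 0 - (1 + t) =
          ((x.1 ^ k) 0 0 - x.1 0 0 ^ k) * w.1 0 0 + (x.1 0 0 ^ k - 1) * w.1 0 0 +
            (w.1 0 0 - (1 + t)) + (x.1 ^ k) 0 1 * w.1 1 0 := by ring
      rw [hsplit]
      exact ((((hsq.trans hxk00).mul_right _).add (hxk.mul_right _)).add (hsq.trans hw00)).add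
        ((hsq.trans hxk01).mul_right _)
  rw [map_mul, map_mul, hρw, mul_left_inj, map_pow, map_pow] at hρxw
  exact pow_left_injective hk.ne' hρxw

theorem IsPowInvariant.rowSymbol_sq_mul [IsDomain R] [Ring.HasFiniteQuotients R]
    [IsMulTorsionFree A] (hρ : KillsElementary ρ) (hinv : IsPowInvariant ρ t (e + 3))
    (ht0 : t ≠ 0) (ht1 : q ^ 2 ∣ t - 1) {a b : R} (h : IsLevelRow q a b) (hat : IsCoprime a t) :
    rowSymbol ρ a (t ^ 2 * b) = rowSymbol ρ a b := by
  have hqt : IsCoprime q t := (isCoprime_of_sq_dvd_sub_one ht1).symm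
  have haT : IsCoprime a (t ^ (e + 3)) := hat.pow_right
  obtain ⟨c, hc, hcT⟩ := exists_dvd_sub_and_dvd_sub (hqt.pow_right.mul_left haT) b 0
  rw [sub_zero] at hcT
  have htb : IsLevelRow q a (t ^ 2 * b) :=
    ⟨h.sq_dvd_sub_one, h.dvd.mul_left _, hat.pow_right.mul_right h.isCoprime⟩
  have htc : q * a ∣ t ^ 2 * c - t ^ 2 * b := mul_sub (t ^ 2) c b ▸ hc.mul_left _
  obtain ⟨x, hx00, hx01, hx10⟩ := (h.congr_right hc).exists_dvd_lower haT
  obtain ⟨x', hx'00, hx'01, hx⟩ :=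
    exists_semiconjBy_diagonal hqt x ((pow_dvd_pow t (by omega)).trans hx10)
  calc rowSymbol ρ a (t ^ 2 * b) = rowSymbol ρ a (t ^ 2 * c) :=
        (rowSymbol_congr_right hρ htb htc).symm
    _ = ρ x' := rowSymbol_eq_map hρ (hx'00.trans hx00) (by rw [hx'01, hx01])
    _ = ρ x := hinv.map_eq_of_semiconjBy_diagonal_of_isCoprime hρ ht0 ht1 hx (by rwa [hx01]) hx10
        (by rwa [hx00])
    _ = rowSymbol ρ a c := (rowSymbol_eq_map hρ hx00 hx01).symm
    _ = rowSymbol ρ a b := rowSymbol_congr_right hρ h hc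

end DiagonalConjugation

/-! ### Torsion-free targets -/

section TorsionFree

variable {F : Type*} [Field F] [NumberField F] {q : ℕ} {u : (𝓞 F)ˣ} {A : Type*} [CommGroup A]
  {ρ : levelSubgroup (q : 𝓞 F) →* A}

theorem exists_isCyclicModulus_sq_dvd_sub_one (hq : IsAdmissibleLevel F q) {a s : 𝓞 F}
    (ha : (q : 𝓞 F) ^ 2 ∣ a - 1) (hs : IsCoprime s a) :
    ∃ (t : 𝓞 F) (n : ℕ), IsCyclicModulus t n ∧ (q : 𝓞 F) ^ 2 ∣ t - 1 ∧ a ∣ t - s := by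
  obtain ⟨z, hz1, hzs⟩ :=
    exists_dvd_sub_and_dvd_sub ((isCoprime_of_sq_dvd_sub_one ha).symm.pow_left (m := 2)) 1 s
  have hz : IsCoprime ((q : 𝓞 F) ^ 2 * a) z :=
    (isCoprime_of_sq_dvd_sub_one hz1).symm.pow_left.mul_left (isCoprime_of_dvd_sub hs hzs).symm
  obtain ⟨t, n, ht, htz, -⟩ := exists_isCyclicModulus_dvd_sub hz
    (mul_ne_zero (pow_ne_zero 2 hq.natCast_ne_zero) (hq.ne_zero_of_sq_dvd_sub_one ha)) one_ne_zero
  exact ⟨t, n, ht, sub_add_sub_cancel t z 1 ▸ ((Dvd.intro _ rfl).trans htz).add hz1,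
    sub_add_sub_cancel t z s ▸ ((Dvd.intro_left _ rfl).trans htz).add hzs⟩

theorem IsLevelRow.exists_prime_dvd_sub {a β : 𝓞 F} {m : ℕ}
    (h : IsLevelRow (q : 𝓞 F) a (q * β)) (hq : IsAdmissibleLevel F q)
    (hβ : IsCyclicModulus β m) (hm : m.Coprime q) :
    ∃ l : ℕ, l.Prime ∧ (4 : ℤ) ∣ l - 1 ∧ (q : 𝓞 F) * (q * β) ∣ (l : 𝓞 F) - a := by
  have hmq : IsCoprime (m : ℤ) (q : ℤ) := Nat.isCoprime_iff_coprime.2 hm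
  have hqβ : IsCoprime (q : 𝓞 F) β := by simpa using hβ.isCoprime_intCast hmq.symm
  obtain ⟨k, hk⟩ := hβ.exists_int_dvd_sub a
  have hkm : IsCoprime k (m : ℤ) :=
    hβ.isCoprime_natCast (isCoprime_of_dvd_sub h.isCoprime.of_mul_right_right
      (dvd_sub_comm.1 hk))
  obtain ⟨l, hl, -, hlM⟩ := exists_prime_gt_forall_dvd_sub (m := ![(m : ℤ), (q : ℤ) ^ 2])
    (k := ![k, 1]) (by
      intro i j hij
      fin_cases i <;> fin_cases j
      exacts [absurd rfl hij, hmq.pow_right, hmq.symm.pow_left, absurd rfl hij])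
    (by simp [Fin.forall_fin_two, hβ.pos.ne', hq.pos.ne'])
    (Fin.forall_fin_two.2 ⟨hkm, isCoprime_one_left⟩) 0
  obtain ⟨hlm, hlq⟩ := Fin.forall_fin_two.1 hlM
  have hlβ : β ∣ (l : 𝓞 F) - a := by
    have hlk := hβ.pow_dvd_intCast_sub (i := 1) (by rwa [pow_one]) (by rwa [pow_one])
    rwa [pow_one, Int.cast_natCast] at hlk
  have hlqa : (q : 𝓞 F) ^ 2 ∣ (l : 𝓞 F) - a := by
    have hlq' : (q : 𝓞 F) ^ 2 ∣ (l : 𝓞 F) - 1 := by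
      simpa using Int.cast_dvd_cast (α := 𝓞 F) _ _ hlq
    exact sub_sub_sub_cancel_right (l : 𝓞 F) a 1 ▸ hlq'.sub h.sq_dvd_sub_one
  refine ⟨l, hl, ?_, ?_⟩
  · exact (by exact_mod_cast hq.four_dvd.trans (dvd_pow_self q two_ne_zero) :
      (4 : ℤ) ∣ (q : ℤ) ^ 2).trans hlq
  · rw [← mul_assoc, ← sq]
    exact hqβ.pow_left.mul_dvd hlqa hlβ

theorem exists_int_dvd_sq_add_one {l : ℕ} (hl : l.Prime) (h4 : (4 : ℤ) ∣ l - 1) :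
    ∃ i : ℤ, (l : ℤ) ∣ i ^ 2 + 1 := by
  have : Fact l.Prime := ⟨hl⟩
  obtain ⟨r, hr⟩ := (ZMod.exists_sq_eq_neg_one_iff (p := l)).2 (by omega)
  obtain ⟨i, rfl⟩ := ZMod.intCast_surjective r
  refine ⟨i, (ZMod.intCast_zmod_eq_zero_iff_dvd _ _).1 ?_⟩
  push_cast
  linear_combination -hr

variable [IsMulTorsionFree A] (hq : IsAdmissibleLevel F q) (hu : ¬ IsOfFinOrder u)
  (hρ : KillsElementary ρ)
include hq hu hρ

theorem rowSymbol_eq_of_dvd_sub_sq_mul {a b b' s : 𝓞 F} (h : IsLevelRow (q : 𝓞 F) a b)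
    (hs : IsCoprime s a) (hb' : (q : 𝓞 F) ∣ b') (hdvd : a ∣ b' - s ^ 2 * b) :
    rowSymbol ρ a b' = rowSymbol ρ a b := by
  obtain ⟨t, n, ht, ht1, hts⟩ := exists_isCyclicModulus_sq_dvd_sub_one hq h.sq_dvd_sub_one hs
  have hat : IsCoprime a t := (isCoprime_of_dvd_sub hs hts).symm
  obtain ⟨e, hinv⟩ := exists_isPowInvariant hq hu hρ ht (isCoprime_of_sq_dvd_sub_one ht1).symm
  have hab' : a ∣ b' - t ^ 2 * b := by
    have hsplit : b' - t ^ 2 * b = b' - s ^ 2 * b - (t - s) * ((t + s) * b) := by ring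
    exact hsplit ▸ hdvd.sub (hts.mul_right _)
  have hqab' : (q : 𝓞 F) * a ∣ b' - t ^ 2 * b :=
    (isCoprime_of_sq_dvd_sub_one h.sq_dvd_sub_one).symm.mul_dvd
      (hb'.sub (h.dvd.mul_left _)) hab'
  rw [rowSymbol_congr_right hρ (h.pow_mul_right hat 2) hqab',
    hinv.rowSymbol_sq_mul hρ ht.ne_zero ht1 h hat]

/-- Modulo `y ^ 2 - q * b`, the second entry `b` is `q` times a square. -/
theorem rowSymbol_eq_one_of_dvd_sq_sub {a b y : 𝓞 F} (h : IsLevelRow (q : 𝓞 F) a b)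
    (hy : (q : 𝓞 F) * b ∣ y ^ 2 - a) : rowSymbol ρ a b = 1 := by
  obtain ⟨a', ha'⟩ : ∃ a', a' = y ^ 2 - q * b := ⟨_, rfl⟩
  have haa' : (q : 𝓞 F) * b ∣ a' - a := by
    rw [ha', sub_right_comm]
    exact hy.sub dvd_rfl
  have h' : IsLevelRow (q : 𝓞 F) a' b := h.congr_left haa'
  have hqa' : IsCoprime a' (q : 𝓞 F) := isCoprime_of_sq_dvd_sub_one h'.sq_dvd_sub_one
  have hya' : IsCoprime y a' := by
    have hcop : IsCoprime (y ^ 2) a' :=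
      isCoprime_of_dvd_sub (hqa'.mul_right h'.isCoprime).symm ⟨1, by rw [ha']; ring⟩
    exact (IsCoprime.pow_left_iff two_pos).1 hcop
  obtain ⟨r', r, hr⟩ := id hqa'
  have hs : IsCoprime (r * y) a' := IsCoprime.mul_left ⟨q, r', by linear_combination hr⟩ hya'
  have hdvd : a' ∣ b - (r * y) ^ 2 * q :=
    ⟨r' * b + r' * r * y ^ 2 - r, by linear_combination -(b + r * y ^ 2) * hr + r * ha'⟩
  calc rowSymbol ρ a b = rowSymbol ρ a' b := (rowSymbol_congr_left hρ h haa').symm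
    _ = rowSymbol ρ a' q := rowSymbol_eq_of_dvd_sub_sq_mul hq hu hρ
        ⟨h'.sq_dvd_sub_one, dvd_rfl, hqa'⟩ hs h.dvd hdvd
    _ = rowSymbol ρ 1 q := rowSymbol_congr_left hρ
        ⟨by simp, dvd_rfl, isCoprime_one_left⟩ (sq (q : 𝓞 F) ▸ h'.sq_dvd_sub_one)
    _ = 1 := rowSymbol_one_left hρ dvd_rfl

theorem map_sq_eq_one_of_dvd_sq_add_one (x : levelSubgroup (q : 𝓞 F)) {i : 𝓞 F}
    (hi : x.1 0 0 ∣ i ^ 2 + 1) : ρ x ^ 2 = 1 := by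
  have hrow := isLevelRow_apply x
  have hdet := SL2_det_eq_one x.1
  have h00 : (x ^ 2).1 0 0 = x.1 0 0 ^ 2 + x.1 0 1 * x.1 1 0 := by
    rw [sq, Subgroup.coe_mul, SL2_mul_apply]
    ring
  have h01 : (x ^ 2).1 0 1 = (x.1 0 0 + x.1 1 1) * x.1 0 1 := by
    rw [sq, Subgroup.coe_mul, SL2_mul_apply]
    ring
  have hrow₂ := isLevelRow_apply (x ^ 2)
  rw [← map_pow, map_eq_rowSymbol hρ, h00, h01]
  rw [h00, h01] at hrow₂
  obtain ⟨c, hc⟩ := x.2.2.1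
  generalize x.1 0 0 = a, x.1 0 1 = b, x.1 1 0 = c', x.1 1 1 = d at *
  subst hc
  have hcop : IsCoprime a (a ^ 2 + b * (q * c)) := ⟨a + d, -1, by linear_combination hdet⟩
  rw [← rowSymbol_eq_of_dvd_sub_sq_mul hq hu hρ hrow₂ hcop (hrow.dvd.mul_left a)
    ⟨-(a * b), by linear_combination -(a * b) * hdet⟩]
  have hqba : IsCoprime ((q : 𝓞 F) * b) a :=
    (isCoprime_of_sq_dvd_sub_one hrow.sq_dvd_sub_one).symm.mul_left hrow.isCoprime.symm
  obtain ⟨y, ⟨y₁, hy₁⟩, ⟨y₂, hy₂⟩⟩ := exists_dvd_sub_and_dvd_sub hqba a i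
  obtain ⟨i', hi'⟩ := hi
  have hyqb : (q : 𝓞 F) * b ∣ y ^ 2 - (a ^ 2 + b * (q * c)) :=
    ⟨y₁ * (y + a) - c, by linear_combination (y + a) * hy₁⟩
  have hya : a ∣ y ^ 2 - (a ^ 2 + b * (q * c)) :=
    ⟨y₂ * (y + i) + i' - a - d, by linear_combination (y + i) * hy₂ + hi' + hdet⟩
  refine rowSymbol_eq_one_of_dvd_sq_sub hq hu hρ (y := y)
    ⟨hrow₂.sq_dvd_sub_one, hrow.dvd.mul_left a,
      hcop.symm.mul_right hrow₂.isCoprime.of_mul_right_right⟩ ?_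
  rw [mul_left_comm, mul_comm a]
  exact hqba.mul_dvd hyqb hya

/-- Elementary operations replace the upper left entry of `x` by a rational prime congruent to `1`
modulo `4`, and `-1` is a square modulo such a prime. -/
theorem KillsElementary.map_eq_one (x : levelSubgroup (q : 𝓞 F)) : ρ x = 1 := by
  have hrow := isLevelRow_apply x
  obtain ⟨b, hb⟩ := hrow.dvd
  obtain ⟨β, m, hβ, ⟨s, hs⟩, hm⟩ := exists_isCyclicModulus_dvd_sub
    (hb ▸ hrow.isCoprime).of_mul_right_right (hq.ne_zero_of_sq_dvd_sub_one hrow.sq_dvd_sub_one)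
    hq.pos.ne'
  have hβb : (q : 𝓞 F) * x.1 0 0 ∣ q * β - x.1 0 1 :=
    ⟨s, by rw [hb]; linear_combination (q : 𝓞 F) * hs⟩
  have hrowβ := hrow.congr_right hβb
  obtain ⟨l, hl, h4, hlx⟩ := hrowβ.exists_prime_dvd_sub hq hβ hm
  obtain ⟨y, hy00, hy01⟩ := (hrowβ.congr_left hlx).exists_apply_eq
  obtain ⟨i, hi⟩ := exists_int_dvd_sq_add_one hl h4
  have hρy : ρ y ^ 2 = 1 := map_sq_eq_one_of_dvd_sq_add_one hq hu hρ y (i := i)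
    (by simpa [hy00] using Int.cast_dvd_cast (α := 𝓞 F) _ _ hi)
  calc ρ x = rowSymbol ρ (x.1 0 0) (q * β) := by
        rw [rowSymbol_congr_right hρ hrow hβb, map_eq_rowSymbol hρ]
    _ = rowSymbol ρ l (q * β) := (rowSymbol_congr_left hρ hrowβ hlx).symm
    _ = ρ y := rowSymbol_eq_map hρ hy00 hy01
    _ = 1 := pow_left_injective two_ne_zero (hρy.trans (one_pow 2).symm)

end TorsionFree

/-! ### Finite generation -/

section FinitelyGenerated

theorem fg_of_injective {A B : Type*} [Group A] [CommGroup B] [Group.FG B] {f : A →* B}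
    (hf : Function.Injective f) : Group.FG A := by
  have : Module.Finite ℤ (Additive B) := Module.Finite.iff_addGroup_fg.2 inferInstance
  have hrange : (AddSubgroup.toIntSubmodule f.range.toAddSubgroup).FG := IsNoetherian.noetherian _
  rw [Submodule.fg_iff_addSubgroup_fg] at hrange
  have : Group.FG f.range :=
    (Group.fg_iff_subgroup_fg _).2 ((Subgroup.fg_iff_add_fg _).2 hrange)
  exact Group.fg_of_surjective (f := (MonoidHom.ofInjective hf).symm.toMonoidHom)
    (MonoidHom.ofInjective hf).symm.surjective

theorem fg_of_ker_le_range {A B C : Type*} [Group A] [Group B] [Group C] (g : C →* A) {f : A →* B}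
    (h : f.ker ≤ g.range) [Group.FG C] [Group.FG f.range] : Group.FG A := by
  obtain ⟨S, hS, hSfin⟩ := Group.fg_iff.1 ‹Group.FG C›
  obtain ⟨T, hT, hTfin⟩ := Group.fg_iff.1 ‹Group.FG f.range›
  choose lift hlift using f.rangeRestrict_surjective
  refine Group.fg_iff.2 ⟨_, ?_, (hSfin.image g).union (hTfin.image lift)⟩
  set H := Subgroup.closure (g '' S ∪ lift '' T)
  have hker : f.ker ≤ H := by
    rw [MonoidHom.range_eq_map, ← hS, MonoidHom.map_closure] at h
    exact h.trans (Subgroup.closure_mono Set.subset_union_left)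
  have hmap : ⊤ ≤ H.map f.rangeRestrict := by
    rw [← hT, Subgroup.closure_le]
    exact fun t ht ↦ ⟨lift t, Subgroup.subset_closure (Or.inr ⟨t, ht, rfl⟩), hlift t⟩
  rw [eq_top_iff]
  intro a _
  obtain ⟨b, hb, hba⟩ := hmap (Subgroup.mem_top (f.rangeRestrict a))
  have hab : a * b⁻¹ ∈ f.ker := by
    rw [← f.ker_rangeRestrict, MonoidHom.mem_ker, map_mul, map_inv, hba, mul_inv_cancel]
  exact inv_mul_cancel_right a b ▸ H.mul_mem (hker hab) hb

end FinitelyGenerated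

section Wedge

variable {R : Type*} [CommRing R]

theorem SL2_smul_apply (σ : SpecialLinearGroup (Fin 2) R) (v : Fin 2 → R) (i : Fin 2) :
    (σ • v) i = σ i 0 * v 0 + σ i 1 * v 1 :=
  Fin.sum_univ_two fun j ↦ σ i j * v j

/-- The alternating form on `R²`: `wedge p v` is the determinant of the matrix with columns `p`
and `v`. -/
noncomputable def wedge : LinearMap.BilinForm R (Fin 2 → R) :=
  Matrix.toBilin' !![0, 1; -1, 0]

theorem wedge_apply (p v : Fin 2 → R) : wedge p v = p 0 * v 1 - p 1 * v 0 := by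
  simp [wedge, Matrix.toBilin'_apply, Fin.sum_univ_two, sub_eq_add_neg]

@[simp] theorem wedge_self (p : Fin 2 → R) : wedge p p = 0 := by
  rw [wedge_apply, mul_comm, sub_self]

theorem neg_wedge (p v : Fin 2 → R) : -wedge p v = wedge v p := by
  simp only [wedge_apply]
  ring

theorem wedge_smul_smul (σ : SpecialLinearGroup (Fin 2) R) (p v : Fin 2 → R) :
    wedge (σ • p) (σ • v) = wedge p v := by
  simp only [wedge_apply, SL2_smul_apply]
  linear_combination (p 0 * v 1 - p 1 * v 0) * SL2_det_eq_one σ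

theorem wedge_smul_left (σ : SpecialLinearGroup (Fin 2) R) (p v : Fin 2 → R) :
    wedge (σ • p) v = wedge p (σ⁻¹ • v) := by
  rw [← wedge_smul_smul σ⁻¹, inv_smul_smul]

/-- Cramer's rule. -/
theorem wedge_smul_eq (p x v : Fin 2 → R) :
    wedge p x • v = wedge v x • p + wedge p v • x := by
  ext i
  simp only [wedge_apply, Pi.add_apply, Pi.smul_apply, smul_eq_mul]
  fin_cases i <;> simp only [Fin.zero_eta, Fin.mk_one] <;> ring

theorem wedge_mul_wedge (p x v w : Fin 2 → R) :
    wedge p x * wedge v w = wedge v x * wedge p w + wedge p v * wedge x w := by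
  simpa using congrArg (wedge · w) (wedge_smul_eq p x v)

theorem exists_wedge_ne_zero {p : Fin 2 → R} (hp : p ≠ 0) : ∃ x, wedge p x ≠ 0 := by
  obtain ⟨i, hi⟩ := Function.ne_iff.1 hp
  fin_cases i
  · exact ⟨![0, 1], by simpa [wedge_apply] using hi⟩
  · exact ⟨![1, 0], by simpa [wedge_apply] using hi⟩

theorem wedge_eq_zero_trans [IsDomain R] {p v w : Fin 2 → R} (hp : p ≠ 0) (hv : wedge p v = 0)
    (hw : wedge p w = 0) : wedge v w = 0 := by
  obtain ⟨x, hx⟩ := exists_wedge_ne_zero hp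
  apply mul_left_cancel₀ hx
  rw [wedge_mul_wedge, hv, hw, mul_zero, zero_mul, add_zero, mul_zero]

theorem eq_one_of_smul_eq [IsDomain R] {σ : SpecialLinearGroup (Fin 2) R} {p x : Fin 2 → R}
    (hpx : wedge p x ≠ 0) (hp : σ • p = p) (hx : σ • x = x) : σ = 1 := by
  refine Subtype.ext (Matrix.ext_iff_mulVec.2 fun v ↦ ?_)
  have hv : σ • v = v := by
    apply smul_right_injective _ hpx
    dsimp only
    rw [← smul_comm σ, wedge_smul_eq p x v, smul_add, smul_comm σ, smul_comm σ, hp, hx]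
  exact hv.trans (one_mulVec v).symm

/-- The transformation is `v ↦ v + wedge v x • a + wedge p v • b`. -/
theorem exists_smul_eq {p x a b : Fin 2 → R} (hreg : IsLeftRegular (wedge p x))
    (h : wedge (p + wedge p x • a) (x + wedge p x • b) = wedge p x) :
    ∃ σ : SpecialLinearGroup (Fin 2) R,
      σ • p = p + wedge p x • a ∧ σ • x = x + wedge p x • b := by
  refine ⟨mkSL2 (1 + a 0 * x 1 - b 0 * p 1) (-a 0 * x 0 + b 0 * p 0) (a 1 * x 1 - b 1 * p 1)
    (1 - a 1 * x 0 + b 1 * p 0) ?_, ?_, ?_⟩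
  · apply hreg
    simp only [wedge_apply, Pi.add_apply, Pi.smul_apply, smul_eq_mul] at h ⊢
    linear_combination h
  all_goals
    ext i
    fin_cases i <;>
    simp only [wedge_apply, SL2_smul_apply, Pi.add_apply, Pi.smul_apply, smul_eq_mul,
      Fin.zero_eta, Fin.mk_one, mkSL2_zero_zero, mkSL2_zero_one, mkSL2_one_zero, mkSL2_one_one] <;>
    ring

theorem exists_eq_add_smul {d : R} {p p' : Fin 2 → R} (h : ∀ i, d ∣ p' i - p i) :
    ∃ a, p' = p + d • a := by
  choose a ha using h
  exact ⟨a, funext fun i ↦ sub_eq_iff_eq_add'.1 (ha i)⟩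

theorem exists_smul_eq_of_dvd_sub [IsDomain R] {M : R} {p x p' x' : Fin 2 → R}
    (h : wedge p x ≠ 0) (hM : wedge p x ∣ M) (hM' : wedge p' x' ∣ M)
    (hp : ∀ i, M ^ 2 ∣ p' i - p i) (hx : ∀ i, M ^ 2 ∣ x' i - x i) :
    ∃ (σ : SpecialLinearGroup (Fin 2) R) (ε : R), σ • p = p' ∧ σ • x = ε • x' := by
  obtain ⟨m, hm⟩ := hM
  obtain ⟨m', hm'⟩ := hM'
  obtain ⟨a, rfl⟩ := exists_eq_add_smul hp
  obtain ⟨b, rfl⟩ := exists_eq_add_smul hx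
  set κ := wedge p x
  set p' := p + M ^ 2 • a
  set x' := x + M ^ 2 • b
  set t := wedge p b + wedge a x + M ^ 2 * wedge a b
  have hdet : wedge p' x' = κ + M ^ 2 * t := by
    simp only [p', x', t, map_add, map_smul, LinearMap.add_apply, LinearMap.smul_apply,
      smul_eq_mul, κ]
    ring
  have hε : (1 - m' * M * t) * wedge p' x' = κ := by
    linear_combination hdet + M * t * hm'
  have hp' : p' = p + κ • (m * M) • a := by
    rw [smul_smul, ← mul_assoc, ← hm, ← sq]
  have hx' : (1 - m' * M * t) • x' = x + κ • m • (M • b - (m' * t) • x') := by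
    rw [smul_smul, ← hm, smul_sub, smul_smul, smul_smul, ← sq, sub_smul, one_smul]
    simp only [x']
    module
  obtain ⟨σ, hσp, hσx⟩ := exists_smul_eq (a := (m * M) • a) (b := m • (M • b - (m' * t) • x'))
    (IsLeftCancelMulZero.mul_left_cancel_of_ne_zero h) (by
      rw [← hp', ← hx', map_smul, smul_eq_mul, hε])
  exact ⟨σ, _, hσp.trans hp'.symm, hσx.trans hx'.symm⟩

end Wedge

section LineStabilizer

variable {R : Type*} [CommRing R]

theorem exists_unit_mul_eq [IsDomain R] [IsIntegrallyClosed R] {a y t : R} (ha : a ≠ 0)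
    (h : y ^ 2 = a * (t * y - a)) : ∃ l : Rˣ, y = l * a := by
  let φ := algebraMap R (FractionRing R)
  have hφa : φ a ≠ 0 := (map_ne_zero_iff φ (IsFractionRing.injective R _)).2 ha
  have hint : IsIntegral R (φ y / φ a) := by
    refine ⟨.X ^ 2 - .C t * .X + 1, by monicity!, ?_⟩
    have hφ : φ y ^ 2 = φ a * (φ t * φ y - φ a) := by simpa using congrArg φ h
    simp only [Polynomial.eval₂_add, Polynomial.eval₂_sub, Polynomial.eval₂_pow,
      Polynomial.eval₂_mul, Polynomial.eval₂_X, Polynomial.eval₂_C, Polynomial.eval₂_one]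
    field_simp
    linear_combination hφ
  obtain ⟨l, hl⟩ := IsIntegrallyClosed.algebraMap_eq_of_integral hint
  have hy : y = l * a := by
    apply IsFractionRing.injective R (FractionRing R)
    rw [map_mul, hl, div_mul_cancel₀ _ hφa]
  have hunit : l * (t - l) = 1 := by
    apply mul_left_cancel₀ (pow_ne_zero 2 ha)
    rw [hy] at h
    linear_combination -h
  exact ⟨⟨l, t - l, hunit, mul_comm l _ ▸ hunit⟩, hy⟩

theorem SL2_smul_smul (γ : SpecialLinearGroup (Fin 2) R) (p : Fin 2 → R) :
    γ • γ • p = (γ 0 0 + γ 1 1) • γ • p - p := by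
  have hdet := SL2_det_eq_one γ
  ext i
  fin_cases i <;>
    simp only [SL2_smul_apply, Pi.sub_apply, Pi.smul_apply, smul_eq_mul, Fin.zero_eta, Fin.mk_one]
  · linear_combination -p 0 * hdet
  · linear_combination -p 1 * hdet

/-- The pairs `(γ, l)` for which `p` is an eigenvector of `γ` with eigenvalue the unit `l`. -/
def eigenPairs (p : Fin 2 → R) : Subgroup (SpecialLinearGroup (Fin 2) R × Rˣ) where
  carrier := {x | x.1 • p = x.2 • p}
  one_mem' := by simp
  mul_mem' {x y} hx hy := by
    simp only [Set.mem_ofPred_eq, Prod.fst_mul, Prod.snd_mul, mul_smul] at hx hy ⊢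
    rw [hy, smul_comm, hx, smul_comm]
  inv_mem' {x} hx := by
    simp only [Set.mem_ofPred_eq, Prod.fst_inv, Prod.snd_inv] at hx ⊢
    rw [inv_smul_eq_iff, smul_comm, hx, inv_smul_smul]

/-- The subgroup of `SL₂(R)` of the matrices that have `p` as an eigenvector with a unit
eigenvalue. -/
def lineStabilizer (p : Fin 2 → R) : Subgroup (SpecialLinearGroup (Fin 2) R) :=
  (eigenPairs p).map (MonoidHom.fst _ _)

theorem wedge_smul_smul_of_smul_eq {p : Fin 2 → R} {γ : SpecialLinearGroup (Fin 2) R}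
    (hγ : γ • p = p) (x : Fin 2 → R) : wedge p x • γ • x = wedge (γ • x) x • p + wedge p x • x := by
  rw [wedge_smul_eq p x, ← wedge_smul_smul γ p x, hγ]

variable [IsDomain R] {p : Fin 2 → R}

theorem mem_lineStabilizer_of_wedge_eq_zero [IsIntegrallyClosed R]
    {γ : SpecialLinearGroup (Fin 2) R} (hp : p ≠ 0) (h : wedge p (γ • p) = 0) :
    γ ∈ lineStabilizer p := by
  obtain ⟨x, hx⟩ := exists_wedge_ne_zero hp
  have hline : wedge p x • γ • p = wedge (γ • p) x • p := by
    rw [wedge_smul_eq p x, h, zero_smul, add_zero]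
  have hchar : wedge (γ • p) x ^ 2 =
      wedge p x * ((γ 0 0 + γ 1 1) * wedge (γ • p) x - wedge p x) := by
    have htwice : wedge p x • wedge (γ • γ • p) x = wedge (γ • p) x * wedge (γ • p) x := by
      simpa only [smul_comm γ, map_smul, LinearMap.smul_apply, smul_eq_mul] using
        congrArg (wedge · x) (congrArg (γ • ·) hline)
    rw [SL2_smul_smul] at htwice
    simp only [map_sub, map_smul, LinearMap.sub_apply, LinearMap.smul_apply, smul_eq_mul]
      at htwice
    linear_combination -htwice
  obtain ⟨l, hl⟩ := exists_unit_mul_eq hx hchar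
  refine ⟨(γ, l), ?_, rfl⟩
  apply smul_right_injective _ hx
  dsimp only
  rw [hline, hl, mul_comm, mul_smul]
  rfl

/-- The homomorphism from the fixer of `p` to the additive group of `R` that measures by which
multiple of `p` an element moves a second vector `x`; see `wedge_smul_smul_of_smul_eq`. -/
noncomputable def stabilizerHom {x : Fin 2 → R} (hx : wedge p x ≠ 0) :
    MulAction.stabilizer (SpecialLinearGroup (Fin 2) R) p →* Multiplicative R where
  toFun γ := .ofAdd (wedge (γ.1 • x) x)
  map_one' := by simp
  map_mul' γ δ := by
    have hmove : wedge p x • γ.1 • δ.1 • x =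
        wedge (δ.1 • x) x • p + (wedge (γ.1 • x) x • p + wedge p x • x) := by
      rw [← wedge_smul_smul_of_smul_eq γ.2, ← smul_comm γ.1,
        wedge_smul_smul_of_smul_eq δ.2, smul_add, smul_comm γ.1, smul_comm γ.1,
        MulAction.mem_stabilizer_iff.1 γ.2]
    have hwedge := congrArg (wedge · x) hmove
    simp only [map_add, map_smul, LinearMap.add_apply, LinearMap.smul_apply, smul_eq_mul,
      wedge_self] at hwedge
    rw [← ofAdd_add, Subgroup.coe_mul, mul_smul]
    congr 1
    apply mul_left_cancel₀ hx
    linear_combination hwedge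

theorem stabilizerHom_injective {x : Fin 2 → R} (hx : wedge p x ≠ 0) :
    Function.Injective (stabilizerHom hx) := by
  rw [injective_iff_map_eq_one]
  intro γ hγ
  have hmove := wedge_smul_smul_of_smul_eq γ.2 x
  have hzero : wedge (γ.1 • x) x = 0 := hγ
  rw [hzero, zero_smul, zero_add] at hmove
  exact Subtype.ext (eq_one_of_smul_eq hx γ.2 (smul_right_injective _ hx hmove))

/-- The stabilizer of a line is an extension of a group of units by a subgroup of the additive
group of `R`. -/
theorem lineStabilizer_fg [AddGroup.FG R] [Group.FG Rˣ] (hp : p ≠ 0) : (lineStabilizer p).FG := by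
  obtain ⟨x, hx⟩ := exists_wedge_ne_zero hp
  have : Group.FG (MulAction.stabilizer (SpecialLinearGroup (Fin 2) R) p) :=
    fg_of_injective (stabilizerHom_injective hx)
  let eigenvalue : eigenPairs p →* Rˣ := (MonoidHom.snd _ _).comp (eigenPairs p).subtype
  let fixer : MulAction.stabilizer (SpecialLinearGroup (Fin 2) R) p →* eigenPairs p :=
    ((MonoidHom.inl _ Rˣ).comp (Subgroup.subtype _)).codRestrict (eigenPairs p)
      fun γ ↦ γ.2.trans (one_smul Rˣ p).symm
  have hker : eigenvalue.ker ≤ fixer.range := by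
    rintro ⟨⟨γ, l⟩, hγ⟩ (rfl : l = 1)
    exact ⟨⟨γ, hγ.trans (one_smul Rˣ p)⟩, rfl⟩
  have : Group.FG eigenvalue.range := fg_of_injective eigenvalue.range.subtype_injective
  have : Group.FG (eigenPairs p) := fg_of_ker_le_range fixer hker
  exact (Group.fg_iff_subgroup_fg _).1 (Group.fg_of_surjective
    (MonoidHom.subgroupMap_surjective (MonoidHom.fst _ _) (eigenPairs p)))

end LineStabilizer

section NatNorm

variable {F : Type*} [Field F]

/-- The absolute value of the norm of an integer of `F`, as a natural number. -/
noncomputable def natNorm : 𝓞 F →* ℕ :=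
  (Int.natAbsHom : ℤ →* ℕ).comp (Algebra.norm ℤ)

theorem natNorm_apply (x : 𝓞 F) : natNorm x = (Algebra.norm ℤ x).natAbs := rfl

theorem natNorm_neg (x : 𝓞 F) : natNorm (-x) = natNorm x := by
  have hone : natNorm (-1 : 𝓞 F) = 1 := by
    apply Nat.eq_one_of_mul_eq_one_right (n := natNorm (-1 : 𝓞 F))
    rw [← map_mul, neg_mul_neg, one_mul, map_one]
  rw [← neg_one_mul, map_mul, hone, one_mul]

theorem natNorm_wedge_comm (p v : Fin 2 → 𝓞 F) : natNorm (wedge p v) = natNorm (wedge v p) := by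
  rw [← neg_wedge, natNorm_neg]

variable [NumberField F]

theorem natNorm_eq_zero {x : 𝓞 F} : natNorm x = 0 ↔ x = 0 := by
  rw [natNorm_apply, Int.natAbs_eq_zero, Algebra.norm_eq_zero_iff]

theorem natNorm_pos {x : 𝓞 F} (h : x ≠ 0) : 0 < natNorm x :=
  Nat.pos_of_ne_zero (mt natNorm_eq_zero.1 h)

theorem natNorm_le_of_dvd {x y : 𝓞 F} (h : x ∣ y) (hy : y ≠ 0) : natNorm x ≤ natNorm y :=
  Nat.le_of_dvd (natNorm_pos hy) (map_dvd _ h)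

theorem dvd_natNorm (x : 𝓞 F) : x ∣ (natNorm x : 𝓞 F) := by
  rw [natNorm_apply, ← Int.cast_natCast, Int.natCast_natAbs]
  rcases abs_choice (Algebra.norm ℤ x) with h | h <;> simp [h, dvd_norm]

theorem dvd_factorial {x : 𝓞 F} (hx : x ≠ 0) {N : ℕ} (h : natNorm x ≤ N) :
    x ∣ (N.factorial : 𝓞 F) :=
  (dvd_natNorm x).trans (Nat.cast_dvd_cast (Nat.dvd_factorial (natNorm_pos hx) h))

end NatNorm

section Reduction

variable {F : Type*} [Field F] {R : 𝓞 F}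

/-- The divisors of `R` suffice as multipliers in an approximate Euclidean division. -/
structure IsDivisionMultiplier (R : 𝓞 F) : Prop where
  ne_zero : R ≠ 0
  exists_natNorm_lt : ∀ a b : 𝓞 F, b ≠ 0 →
    ∃ r s : 𝓞 F, r ∣ R ∧ natNorm (r * a - s * b) < natNorm b

theorem IsDivisionMultiplier.exists_smul_eq_wedge_smul (hR : IsDivisionMultiplier R)
    {p : Fin 2 → 𝓞 F} (hp : p ≠ 0) : ∃ x v, wedge p x ≠ 0 ∧ R • p = wedge p x • v := by
  obtain ⟨x, hx, hmin⟩ := WellFounded.has_min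
    (measure fun x : Fin 2 → 𝓞 F ↦ natNorm (wedge p x)).wf
    {x | wedge p x ≠ 0} (exists_wedge_ne_zero hp)
  have hdvd (z : Fin 2 → 𝓞 F) : wedge p x ∣ R * wedge p z := by
    obtain ⟨r, s, hr, h⟩ := hR.exists_natNorm_lt (wedge p z) (wedge p x) hx
    have hzero : wedge p (r • z - s • x) = 0 := by
      by_contra hne
      refine hmin _ hne (?_ : natNorm _ < natNorm _)
      rwa [map_sub, map_smul, map_smul, smul_eq_mul, smul_eq_mul]
    rw [map_sub, map_smul, map_smul, smul_eq_mul, smul_eq_mul, sub_eq_zero] at hzero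
    exact (Dvd.intro_left s hzero.symm).trans (mul_dvd_mul_right hr _)
  have hcoord (i : Fin 2) : wedge p x ∣ R * p i := by
    fin_cases i
    · simpa [wedge_apply p ![0, 1]] using hdvd ![0, 1]
    · simpa [wedge_apply p ![-1, 0]] using hdvd ![-1, 0]
  choose v hv using hcoord
  exact ⟨x, v, hx, funext hv⟩

/-- The ideal generated by the coordinates of `p` contains a nonzero element of norm at most that
of `R`. -/
def IsNearlyPrimitive (R : 𝓞 F) (p : Fin 2 → 𝓞 F) : Prop :=
  ∃ x, wedge p x ≠ 0 ∧ natNorm (wedge p x) ≤ natNorm R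

theorem IsNearlyPrimitive.ne_zero {p : Fin 2 → 𝓞 F} (h : IsNearlyPrimitive R p) : p ≠ 0 := by
  rintro rfl
  obtain ⟨x, hx, -⟩ := h
  simp at hx

variable [NumberField F]

variable (F) in
theorem exists_isDivisionMultiplier : ∃ R : 𝓞 F, IsDivisionMultiplier R := by
  classical
  let basis := RingOfIntegers.basis F
  let adm := AbsoluteValue.absIsAdmissible
  refine ⟨algebraMap ℤ (𝓞 F) (∏ m ∈ ClassGroup.finsetApprox basis adm, m),
    ClassGroup.prod_finsetApprox_ne_zero basis adm, fun a b hb ↦ ?_⟩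
  obtain ⟨s, r, hr, h⟩ := ClassGroup.exists_mem_finset_approx' basis adm a hb
  refine ⟨algebraMap ℤ (𝓞 F) r, s, map_dvd _ (Finset.dvd_prod_of_mem _ hr), ?_⟩
  rw [Algebra.smul_def] at h
  simp only [natNorm_apply]
  zify
  exact h

theorem exists_minimal_on_line {w : Fin 2 → 𝓞 F} (hw : w ≠ 0) :
    ∃ p ≠ 0, wedge p w = 0 ∧
      ∀ v ≠ 0, wedge v w = 0 → ∀ y, natNorm (wedge p y) ≤ natNorm (wedge v y) := by
  obtain ⟨z, hz⟩ := exists_wedge_ne_zero hw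
  have hvz {v : Fin 2 → 𝓞 F} (hv : v ≠ 0) (hvw : wedge v w = 0) : wedge v z ≠ 0 := fun h ↦
    hz (wedge_eq_zero_trans hv hvw h)
  obtain ⟨p, ⟨hp, hpw⟩, hmin⟩ := WellFounded.has_min
    (measure fun v : Fin 2 → 𝓞 F ↦ natNorm (wedge v z)).wf
    {v | v ≠ 0 ∧ wedge v w = 0} ⟨w, hw, wedge_self w⟩
  refine ⟨p, hp, hpw, fun v hv hvw y ↦ ?_⟩
  have hpv : wedge v p = 0 := wedge_eq_zero_trans hw
    (by rw [← neg_wedge, hvw, neg_zero]) (by rw [← neg_wedge, hpw, neg_zero])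
  have hprod : wedge v z * wedge p y = wedge p z * wedge v y := by
    rw [wedge_mul_wedge, hpv, zero_mul, add_zero]
  have hprod' := congrArg natNorm hprod
  rw [map_mul, map_mul] at hprod'
  refine Nat.le_of_mul_le_mul_left (hprod'.trans_le ?_) (natNorm_pos (hvz hv hvw))
  exact Nat.mul_le_mul_right _ (not_lt.1 (hmin v ⟨hv, hvw⟩))

theorem IsDivisionMultiplier.exists_isNearlyPrimitive (hR : IsDivisionMultiplier R)
    {w : Fin 2 → 𝓞 F} (hw : w ≠ 0) :
    ∃ p, IsNearlyPrimitive R p ∧ ∀ y, natNorm (wedge p y) ≤ natNorm (wedge w y) := by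
  obtain ⟨p, hp, hpw, hmin⟩ := exists_minimal_on_line hw
  refine ⟨p, ?_, hmin w hw (wedge_self w)⟩
  obtain ⟨x, v, hx, hv⟩ := hR.exists_smul_eq_wedge_smul hp
  have hv0 : v ≠ 0 := by
    rintro rfl
    exact smul_ne_zero hR.ne_zero hp (by rw [hv, smul_zero])
  have hline : R * wedge p w = wedge p x * wedge v w := by
    simpa using congrArg (wedge · w) hv
  have hvw : wedge v w = 0 := by
    rw [hpw, mul_zero] at hline
    exact (mul_eq_zero.1 hline.symm).resolve_left hx
  have hnorm : natNorm R * natNorm (wedge p x) = natNorm (wedge p x) * natNorm (wedge v x) := by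
    rw [← map_mul, ← map_mul]
    exact congrArg natNorm (by simpa using congrArg (wedge · x) hv)
  refine ⟨x, hx, ?_⟩
  refine (hmin v hv0 hvw x).trans_eq (Nat.eq_of_mul_eq_mul_left (natNorm_pos hx) ?_)
  rw [← hnorm, mul_comm]

theorem IsDivisionMultiplier.exists_natNorm_wedge_lt (hR : IsDivisionMultiplier R)
    {p v : Fin 2 → 𝓞 F} (hp : IsNearlyPrimitive R p) (hv : wedge p v ≠ 0) :
    ∃ p', IsNearlyPrimitive R p' ∧ natNorm (wedge p p') ≤ natNorm R * natNorm R ∧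
      natNorm (wedge p' v) < natNorm (wedge p v) := by
  obtain ⟨x, hx, hxR⟩ := hp
  obtain ⟨r, s, hr, h⟩ := hR.exists_natNorm_lt (wedge x v) (wedge p v) hv
  have hpw : wedge p (r • x - s • p) = r * wedge p x := by simp
  have hwv : wedge (r • x - s • p) v = r * wedge x v - s * wedge p v := by simp
  have hr0 : r ≠ 0 := ne_zero_of_dvd_ne_zero hR.ne_zero hr
  have hw0 : r • x - s • p ≠ 0 := fun h0 ↦
    mul_ne_zero hr0 hx (by rw [← hpw, h0, map_zero])
  obtain ⟨p', hp', hle⟩ := hR.exists_isNearlyPrimitive hw0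
  refine ⟨p', hp', ?_, (hle v).trans_lt (by rwa [hwv])⟩
  rw [natNorm_wedge_comm]
  refine (hle p).trans ?_
  rw [natNorm_wedge_comm, hpw, map_mul]
  exact Nat.mul_le_mul (natNorm_le_of_dvd hr hR.ne_zero) hxR

end Reduction

section Generators

variable {F : Type*} [Field F]

/-- Reduction of vectors modulo `(N!)²`. -/
noncomputable def reduction (N : ℕ) (v : Fin 2 → 𝓞 F) :
    Fin 2 → 𝓞 F ⧸ Ideal.span {(N.factorial : 𝓞 F) ^ 2} :=
  Ideal.Quotient.mk _ ∘ v

theorem dvd_sub_of_reduction_eq {N : ℕ} {v w : Fin 2 → 𝓞 F} (h : reduction N v = reduction N w)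
    (i : Fin 2) : (N.factorial : 𝓞 F) ^ 2 ∣ v i - w i := by
  rw [← Ideal.mem_span_singleton, ← Ideal.Quotient.eq]
  exact congrFun h i

variable [NumberField F]

instance finite_quotient_factorial_sq (N : ℕ) :
    Finite (𝓞 F ⧸ Ideal.span {(N.factorial : 𝓞 F) ^ 2}) :=
  Ring.HasFiniteQuotients.finiteQuotient (mt Ideal.span_singleton_eq_bot.1
    (pow_ne_zero 2 (Nat.cast_ne_zero.2 N.factorial_ne_zero)))

theorem exists_smul_eq_of_reduction_eq {N : ℕ} {p x p' x' : Fin 2 → 𝓞 F}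
    (h : wedge p x ≠ 0) (hN : natNorm (wedge p x) ≤ N)
    (h' : wedge p' x' ≠ 0) (hN' : natNorm (wedge p' x') ≤ N)
    (hp : reduction N p' = reduction N p) (hx : reduction N x' = reduction N x) :
    ∃ (σ : SpecialLinearGroup (Fin 2) (𝓞 F)) (ε : 𝓞 F), σ • p = p' ∧ σ • x = ε • x' :=
  exists_smul_eq_of_dvd_sub h (dvd_factorial h hN) (dvd_factorial h' hN')
    (dvd_sub_of_reduction_eq hp) (dvd_sub_of_reduction_eq hx)

theorem exists_finite_orbit_representatives (R : 𝓞 F) :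
    ∃ P : Set (Fin 2 → 𝓞 F), P.Finite ∧ (∀ p ∈ P, IsNearlyPrimitive R p) ∧
      ∀ v, IsNearlyPrimitive R v →
        ∃ p ∈ P, ∃ γ : SpecialLinearGroup (Fin 2) (𝓞 F), γ • p = v := by
  set N := natNorm R
  obtain ⟨Y, hYX, hY, himage⟩ := (Set.toFinite _).exists_subset_finite_image_eq
    (f := fun a : (Fin 2 → 𝓞 F) × (Fin 2 → 𝓞 F) ↦ (reduction N a.1, reduction N a.2))
    (s := {a | wedge a.1 a.2 ≠ 0 ∧ natNorm (wedge a.1 a.2) ≤ N}) subset_rfl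
  refine ⟨Prod.fst '' Y, hY.image _, ?_, ?_⟩
  · rintro _ ⟨a, ha, rfl⟩
    exact ⟨a.2, hYX ha⟩
  · rintro v ⟨x, hx, hxN⟩
    obtain ⟨a, ha, hred⟩ := himage.ge ⟨(v, x), ⟨hx, hxN⟩, rfl⟩
    obtain ⟨hred₁, hred₂⟩ := Prod.mk.inj hred
    obtain ⟨σ, -, hσ, -⟩ := exists_smul_eq_of_reduction_eq (hYX ha).1 (hYX ha).2 hx hxN
      hred₁.symm hred₂.symm
    exact ⟨a.1, ⟨a, ha, rfl⟩, σ, hσ⟩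

/-- The `γ` for which `γ • p'` is close to the line through `p` lie in finitely many double cosets
of the stabilizers of the lines through `p` and `p'`. -/
theorem exists_finite_forall_mem_of_lineStabilizer_le (N : ℕ) {p p' : Fin 2 → 𝓞 F} (hp : p ≠ 0)
    (hp' : p' ≠ 0) :
    ∃ Y : Set (SpecialLinearGroup (Fin 2) (𝓞 F)), Y.Finite ∧
      ∀ H : Subgroup (SpecialLinearGroup (Fin 2) (𝓞 F)), Y ⊆ H → lineStabilizer p ≤ H →
        lineStabilizer p' ≤ H → ∀ γ : SpecialLinearGroup (Fin 2) (𝓞 F),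
          natNorm (wedge p (γ • p')) ≤ N → γ ∈ H := by
  obtain ⟨Y, hYX, hY, himage⟩ := (Set.toFinite _).exists_subset_finite_image_eq
    (f := fun γ : SpecialLinearGroup (Fin 2) (𝓞 F) ↦
      (wedge p (γ • p') = 0, reduction N (γ • p')))
    (s := {γ | natNorm (wedge p (γ • p')) ≤ N}) subset_rfl
  refine ⟨Y, hY, fun H hYH hpH hp'H γ hγ ↦ ?_⟩
  obtain ⟨y, hy, hred⟩ := himage.ge ⟨γ, hγ, rfl⟩
  obtain ⟨hzero, hred⟩ := Prod.mk.inj hred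
  obtain ⟨σ, hσ, hline⟩ : ∃ σ ∈ lineStabilizer p, wedge (y • p') (σ • γ • p') = 0 := by
    by_cases hz : wedge p (γ • p') = 0
    · exact ⟨1, one_mem _, by rw [one_smul]; exact wedge_eq_zero_trans hp (hzero.mpr hz) hz⟩
    · obtain ⟨σ, ε, hσp, hσ⟩ := exists_smul_eq_of_reduction_eq hz hγ
        (fun h ↦ hz (hzero.mp h)) (hYX hy) rfl hred
      refine ⟨σ, mem_lineStabilizer_of_wedge_eq_zero hp (by rw [hσp, wedge_self]), ?_⟩
      rw [hσ, map_smul, wedge_self, smul_zero]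
  have hstab : y⁻¹ * (σ * γ) ∈ lineStabilizer p' := by
    apply mem_lineStabilizer_of_wedge_eq_zero hp'
    rwa [mul_smul, mul_smul, ← wedge_smul_left]
  rw [← H.mul_mem_cancel_left (hpH hσ), ← H.mul_mem_cancel_left (H.inv_mem (hYH hy))]
  exact hp'H hstab

theorem exists_fg_forall_mem (N : ℕ) {P : Set (Fin 2 → 𝓞 F)} (hP : P.Finite)
    (hP0 : ∀ p ∈ P, p ≠ 0) :
    ∃ H : Subgroup (SpecialLinearGroup (Fin 2) (𝓞 F)), H.FG ∧ ∀ p ∈ P, ∀ p' ∈ P,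
      ∀ γ : SpecialLinearGroup (Fin 2) (𝓞 F), natNorm (wedge p (γ • p')) ≤ N → γ ∈ H := by
  have : AddGroup.FG (𝓞 F) := Module.Finite.iff_addGroup_fg.1 inferInstance
  have : Group.FG (𝓞 F)ˣ := Group.fg_iff_monoid_fg.2 inferInstance
  choose! Y hYfin hY using fun (a : (Fin 2 → 𝓞 F) × (Fin 2 → 𝓞 F)) (ha : a ∈ P ×ˢ P) ↦
    exists_finite_forall_mem_of_lineStabilizer_le N (hP0 _ ha.1) (hP0 _ ha.2)
  have hYfin' : (⋃ a ∈ P ×ˢ P, Y a).Finite := (hP.prod hP).biUnion hYfin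
  refine ⟨(⨆ p ∈ P, lineStabilizer p) ⊔ Subgroup.closure (⋃ a ∈ P ×ˢ P, Y a),
    (Subgroup.FG.biSup hP _ fun p hp ↦ lineStabilizer_fg (hP0 p hp)).sup
      ((Subgroup.fg_iff _).2 ⟨_, rfl, hYfin'⟩), fun p hp p' hp' ↦ ?_⟩
  have hpp' : (p, p') ∈ P ×ˢ P := ⟨hp, hp'⟩
  refine hY (p, p') hpp' _ ?_ (le_sup_of_le_left (le_biSup _ hp))
    (le_sup_of_le_left (le_biSup _ hp'))
  exact (Set.subset_biUnion_of_mem hpp').trans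
    (Subgroup.subset_closure.trans (SetLike.coe_mono le_sup_right))

variable (F) in
/-- A sequence of nearly primitive vectors, each close to its predecessor and closer to a given line
than it, writes any matrix as a product of matrices that move one representative close to
another. -/
theorem SL2_fg : Group.FG (SpecialLinearGroup (Fin 2) (𝓞 F)) := by
  obtain ⟨R, hR⟩ := exists_isDivisionMultiplier F
  obtain ⟨P, hPfin, hPR, hP⟩ := exists_finite_orbit_representatives R
  obtain ⟨H, hHfg, hH⟩ := exists_fg_forall_mem (natNorm R * natNorm R) hPfin
    fun p hp ↦ (hPR p hp).ne_zero
  have hdescent (n : ℕ) : ∀ p ∈ P, ∀ p' ∈ P, ∀ γ : SpecialLinearGroup (Fin 2) (𝓞 F),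
      natNorm (wedge p (γ • p')) = n → γ ∈ H := by
    induction n using Nat.strong_induction_on with
    | _ n ih =>
      intro p hp p' hp' γ hγ
      by_cases h0 : wedge p (γ • p') = 0
      · exact hH p hp p' hp' γ (by rw [h0, natNorm_eq_zero.2 rfl]; exact Nat.zero_le _)
      obtain ⟨v, hv, hpv, hlt⟩ := hR.exists_natNorm_wedge_lt (hPR p hp) h0
      obtain ⟨r, hr, δ, rfl⟩ := hP v hv
      rw [wedge_smul_left, ← mul_smul, hγ] at hlt
      rw [← H.mul_mem_cancel_left (H.inv_mem (hH p hp r hr δ hpv))]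
      exact ih _ hlt r hr p' hp' _ rfl
  obtain ⟨w, hw⟩ := exists_ne (0 : Fin 2 → 𝓞 F)
  obtain ⟨v, hv, -⟩ := hR.exists_isNearlyPrimitive hw
  obtain ⟨p, hp, -⟩ := hP v hv
  have hHtop : H = ⊤ := eq_top_iff.2 fun γ _ ↦ hdescent _ p hp p hp γ rfl
  exact Group.fg_def.2 (hHtop ▸ hHfg)

end Generators

/-! ### Torsion in the abelianization -/

section Torsion

open SpecialLinearGroup

open scoped commutatorElement

variable {R : Type*} [CommRing R]

/-- The matrix `diag(u, u⁻¹)` as an element of `SL₂(R)`. -/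
def diagonalSL2 : Rˣ →* SpecialLinearGroup (Fin 2) R where
  toFun u := mkSL2 u 0 0 (u⁻¹ : Rˣ) (by simp)
  map_one' := by apply SL2_ext <;> simp
  map_mul' u v := by apply SL2_ext <;> simp [SL2_mul_apply, mul_comm]

theorem transvection_natCast_mul {n : Type*} [Fintype n] [DecidableEq n] {i j : n} (hij : i ≠ j)
    (m : ℕ) (b : R) : transvection hij (m * b) = transvection hij b ^ m := by
  induction m with
  | zero => simp [transvection_coeff_zero]
  | succ m ih => rw [Nat.cast_succ, add_one_mul, transvection_add, ih, pow_succ]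

theorem transvection_zero_one (b : R) :
    transvection zero_ne_one b = mkSL2 1 b 0 1 (by ring) := by
  apply SL2_ext <;> simp [transvection_coe]

theorem transvection_one_zero (b : R) :
    transvection one_ne_zero b = mkSL2 1 0 b 1 (by ring) := by
  apply SL2_ext <;> simp [transvection_coe]

theorem commutator_diagonalSL2_transvection (u : Rˣ) (b : R) :
    ⁅diagonalSL2 u, transvection (zero_ne_one' (Fin 2)) b⁆ =
      transvection (zero_ne_one' (Fin 2)) (((u : R) ^ 2 - 1) * b) := by
  rw [commutatorElement_def, mul_inv_eq_iff_eq_mul, mul_inv_eq_iff_eq_mul]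
  simp only [transvection_zero_one]
  apply SL2_ext <;> simp only [diagonalSL2, MonoidHom.coe_mk, OneHom.coe_mk, SL2_mul_apply,
    mkSL2_zero_zero, mkSL2_zero_one, mkSL2_one_zero, mkSL2_one_one]
  · ring
  · linear_combination (-(u : R) * b) * u.mul_inv
  · ring
  · ring

theorem transvection_one_zero_eq_conj (b : R) :
    ∃ w : SpecialLinearGroup (Fin 2) R,
      transvection one_ne_zero b = w * transvection zero_ne_one (-b) * w⁻¹ := by
  refine ⟨mkSL2 0 (-1) 1 0 (by ring), ?_⟩
  rw [eq_mul_inv_iff_mul_eq, transvection_zero_one, transvection_one_zero]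
  apply SL2_ext <;> simp [SL2_mul_apply]

section TorsionPart

variable {G : Type*} [Group G] {Γ : Subgroup G}

/-- The elements of `Γ` whose class in the abelianization of `Γ` has finite order, as a subgroup of
the ambient group. -/
def torsionPart (Γ : Subgroup G) : Subgroup G :=
  ((CommGroup.torsion (Abelianization Γ)).comap Abelianization.of).map Γ.subtype

theorem mem_torsionPart (x : Γ) : (x : G) ∈ torsionPart Γ ↔ IsOfFinOrder (Abelianization.of x) :=
  Subgroup.mem_map_iff_mem Γ.subtype_injective

theorem mem_torsionPart_of_pow_mem {x : G} (hx : x ∈ Γ) {k : ℕ} (hk : k ≠ 0)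
    (h : x ^ k ∈ torsionPart Γ) : x ∈ torsionPart Γ := by
  lift x to Γ using hx
  rw [← Subgroup.coe_pow, mem_torsionPart, map_pow] at h
  exact (mem_torsionPart x).2 (h.of_pow hk)

theorem commutator_mem_torsionPart {x y : G} (hx : x ∈ Γ) (hy : y ∈ Γ) :
    ⁅x, y⁆ ∈ torsionPart Γ := by
  lift x to Γ using hx
  lift y to Γ using hy
  refine (mem_torsionPart ⁅x, y⁆).2 ?_
  rw [map_commutatorElement, commutatorElement_eq_one_iff_mul_comm.2 (mul_comm _ _)]
  exact IsOfFinOrder.one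

theorem conj_pow_normalCore_index_mem (x g : G) : g * x ^ Γ.normalCore.index * g⁻¹ ∈ Γ :=
  Γ.normalCore_le (Subgroup.Normal.conj_mem inferInstance _ (Subgroup.pow_index_mem _ x) g)

end TorsionPart

variable {F : Type*} [Field F] [NumberField F]

/-- With `m` the index of the normal core, the commutator with `diag(u ^ m, u ^ (-m))` multiplies
the entry by `u ^ (2 * m) - 1`, which divides a positive integer. -/
theorem conj_transvection_mem_torsionPart
    {Γ : Subgroup (SpecialLinearGroup (Fin 2) (𝓞 F))} [Γ.FiniteIndex] {u : (𝓞 F)ˣ}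
    (hu : ¬ IsOfFinOrder u) {q : ℕ} (hq : Γ.normalCore.index ∣ q)
    (γ : SpecialLinearGroup (Fin 2) (𝓞 F)) (z : 𝓞 F) :
    γ * transvection zero_ne_one (q * z) * γ⁻¹ ∈ torsionPart Γ := by
  have hmem (b : 𝓞 F) : γ * transvection zero_ne_one (q * b) * γ⁻¹ ∈ Γ := by
    obtain ⟨n, rfl⟩ := hq
    rw [Nat.cast_mul, mul_assoc (Γ.normalCore.index : 𝓞 F), transvection_natCast_mul]
    exact conj_pow_normalCore_index_mem _ γ
  set m := Γ.normalCore.index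
  have hm0 : m ≠ 0 := Subgroup.FiniteIndex.index_ne_zero
  set w : 𝓞 F := ((u ^ m : (𝓞 F)ˣ) : 𝓞 F) ^ 2 - 1
  have hw : w ≠ 0 := fun h ↦ hu <| isOfFinOrder_iff_pow_eq_one.2 ⟨m * 2, by positivity, by
    rw [pow_mul]
    exact Units.ext (by simpa using sub_eq_zero.1 h)⟩
  obtain ⟨c, hc⟩ := dvd_natNorm w
  refine mem_torsionPart_of_pow_mem (hmem z) (natNorm_pos hw).ne' ?_
  have hentry : (natNorm w : 𝓞 F) * (q * z) = w * (q * (c * z)) := by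
    rw [hc]
    ring
  rw [conj_pow, ← transvection_natCast_mul, hentry, ← commutator_diagonalSL2_transvection,
    conjugate_commutatorElement, map_pow]
  exact commutator_mem_torsionPart (conj_pow_normalCore_index_mem _ γ) (hmem _)

variable {q : ℕ}

/-- The image of `ρ` is commutative, and its quotient by the torsion subgroup is trivial. -/
theorem KillsElementary.isOfFinOrder_map (hq : IsAdmissibleLevel F q) {u : (𝓞 F)ˣ}
    (hu : ¬ IsOfFinOrder u) {C : Type*} [Group C] {ρ : levelSubgroup (q : 𝓞 F) →* C}
    (hρ : KillsElementary ρ) (x : levelSubgroup (q : 𝓞 F)) : IsOfFinOrder (ρ x) := by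
  let _ : CommGroup ρ.range :=
    { (inferInstance : Group ρ.range) with
      mul_comm := by
        rintro ⟨_, y, rfl⟩ ⟨_, z, rfl⟩
        exact Subtype.ext (map_mul_comm hq hu hρ y z) }
  have hkills : KillsElementary
      ((QuotientGroup.mk' (CommGroup.torsion ρ.range)).comp ρ.rangeRestrict) := by
    refine ⟨fun z ↦ ?_, fun z ↦ ?_⟩ <;> rw [MonoidHom.comp_apply]
    · rw [(Subtype.ext (hρ.upper z) : ρ.rangeRestrict _ = 1), map_one]
    · rw [(Subtype.ext (hρ.lower z) : ρ.rangeRestrict _ = 1), map_one]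
  have htorsion : ρ.rangeRestrict x ∈ CommGroup.torsion ρ.range :=
    (QuotientGroup.eq_one_iff _).1 (hkills.map_eq_one hq hu x)
  exact ρ.range.subtype.isOfFinOrder ((CommGroup.mem_torsion _).1 htorsion)

theorem exists_pow_mem_of_conj_transvection_mem (hq : IsAdmissibleLevel F q) {u : (𝓞 F)ˣ}
    (hu : ¬ IsOfFinOrder u) {T : Subgroup (SpecialLinearGroup (Fin 2) (𝓞 F))}
    (hT : ∀ (γ : SpecialLinearGroup (Fin 2) (𝓞 F)) (z : 𝓞 F),
      γ * transvection zero_ne_one (q * z) * γ⁻¹ ∈ T) (x : levelSubgroup (q : 𝓞 F)) :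
    ∃ k, 0 < k ∧ x.1 ^ k ∈ T := by
  set E : Set (levelSubgroup (q : 𝓞 F)) :=
    Set.range (upperElementary (q : 𝓞 F)) ∪ Set.range (lowerElementary (q : 𝓞 F))
  have hle : Subgroup.normalClosure E ≤ T.comap (levelSubgroup (q : 𝓞 F)).subtype := by
    refine (Subgroup.closure_le _).2 fun y hy ↦ ?_
    obtain ⟨_, ⟨z, rfl⟩ | ⟨z, rfl⟩, hconj⟩ := Group.mem_conjugatesOfSet_iff.1 hy <;>
      obtain ⟨c, rfl⟩ := isConj_iff.1 hconj
    · have h := hT c.1 z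
      rw [transvection_zero_one] at h
      exact h
    · obtain ⟨w, hw⟩ := transvection_one_zero_eq_conj ((q : 𝓞 F) * z)
      have h := hT (c.1 * w) (-z)
      rw [mul_neg, _root_.mul_inv_rev, ← mul_assoc, mul_assoc c.1, mul_assoc c.1, ← hw,
        transvection_one_zero] at h
      exact h
  have hkills : KillsElementary (QuotientGroup.mk' (Subgroup.normalClosure E)) :=
    ⟨fun z ↦ (QuotientGroup.eq_one_iff _).2 (Subgroup.subset_normalClosure (.inl ⟨z, rfl⟩)),
      fun z ↦ (QuotientGroup.eq_one_iff _).2 (Subgroup.subset_normalClosure (.inr ⟨z, rfl⟩))⟩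
  obtain ⟨k, hk, hpow⟩ := isOfFinOrder_iff_pow_eq_one.1 (hkills.isOfFinOrder_map hq hu x)
  exact ⟨k, hk, hle ((QuotientGroup.eq_one_iff (x ^ k)).1 hpow)⟩

theorem exists_pow_mem_levelSubgroup [Ring.HasFiniteQuotients R] {q : R} (hq : q ^ 2 ≠ 0)
    (x : SpecialLinearGroup (Fin 2) R) : ∃ k, 0 < k ∧ x ^ k ∈ levelSubgroup q := by
  set I := Ideal.span {q ^ 2}
  have : Finite (R ⧸ I) :=
    Ring.HasFiniteQuotients.finiteQuotient (mt Ideal.span_singleton_eq_bot.1 hq)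
  obtain ⟨k, hk, hpow⟩ := isOfFinOrder_iff_pow_eq_one.1
    (isOfFinOrder_of_finite (SpecialLinearGroup.map (Ideal.Quotient.mk I) x))
  rw [← map_pow] at hpow
  have hdvd (i j : Fin 2) : q ^ 2 ∣ (x ^ k) i j - (1 : Matrix (Fin 2) (Fin 2) R) i j := by
    rw [← Ideal.mem_span_singleton, ← Ideal.Quotient.eq]
    have hij : Ideal.Quotient.mk I ((x ^ k) i j) = (1 : Matrix (Fin 2) (Fin 2) (R ⧸ I)) i j :=
      congrArg (fun y : SpecialLinearGroup (Fin 2) (R ⧸ I) ↦ y i j) hpow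
    rw [hij, one_apply, one_apply]
    split_ifs <;> simp
  have hq2 : q ∣ q ^ 2 := dvd_pow_self q two_ne_zero
  exact ⟨k, hk, mem_levelSubgroup_of_dvd (hq2.trans (by simpa using hdvd 0 1))
    (hq2.trans (by simpa using hdvd 1 0)) (by simpa using hdvd 0 0)⟩

theorem isMulTorsion_abelianization {u : (𝓞 F)ˣ} (hu : ¬ IsOfFinOrder u)
    (Γ : Subgroup (SpecialLinearGroup (Fin 2) (𝓞 F))) [Γ.FiniteIndex] :
    IsMulTorsion (Abelianization Γ) := by
  intro a
  obtain ⟨x, rfl⟩ := QuotientGroup.mk'_surjective _ a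
  have hm : 0 < Γ.normalCore.index := Nat.pos_of_ne_zero Subgroup.FiniteIndex.index_ne_zero
  set m := Γ.normalCore.index
  have hq : IsAdmissibleLevel F (((Module.finrank ℚ F).factorial + 1).factorial * (4 * m)) :=
    ⟨by positivity, dvd_mul_right _ _, (dvd_mul_right 4 m).mul_left _⟩
  obtain ⟨j, hj, hxj⟩ := exists_pow_mem_levelSubgroup (pow_ne_zero 2 hq.natCast_ne_zero) x.1
  obtain ⟨k, hk, hxk⟩ := exists_pow_mem_of_conj_transvection_mem hq hu
    (conj_transvection_mem_torsionPart hu (((dvd_mul_left m 4).mul_left _))) ⟨_, hxj⟩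
  refine (mem_torsionPart x).1 (mem_torsionPart_of_pow_mem x.2 (mul_pos hj hk).ne' ?_)
  rwa [pow_mul]

end Torsion

section UnitRank

variable {F : Type*} [Field F]

theorem isTotallyReal_of_forall_exists_eq_ofReal (h : ∀ φ : F →+* ℂ, ∀ x : F, ∃ r : ℝ, φ x = r) :
    IsTotallyReal F where
  isReal v := by
    rw [InfinitePlace.isReal_iff, ComplexEmbedding.isReal_iff]
    ext x
    obtain ⟨r, hr⟩ := h v.embedding x
    rw [ComplexEmbedding.conjugate_coe_eq, hr, Complex.conj_ofReal]

variable [NumberField F]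

theorem exists_not_isOfFinOrder_of_rank_ne_zero (h : Units.rank F ≠ 0) :
    ∃ u : (𝓞 F)ˣ, ¬ IsOfFinOrder u := by
  contrapose! h
  have hrank : Module.rank ℤ (Additive (𝓞 F)ˣ) = 0 := rank_eq_zero_iff.2 fun x ↦ by
    obtain ⟨k, hk, hpow⟩ := isOfFinOrder_iff_zpow_eq_one.1 (h x.toMul)
    exact ⟨k, hk, hpow⟩
  rw [← Units.finrank_eq, Module.finrank, hrank, map_zero]

theorem rank_ne_zero_of_isTotallyReal [IsTotallyReal F] (h : 2 ≤ Module.finrank ℚ F) :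
    Units.rank F ≠ 0 := by
  rw [IsTotallyReal.finrank] at h
  rw [Units.rank, InfinitePlace.card_eq_nrRealPlaces_add_nrComplexPlaces]
  omega

end UnitRank

theorem finite_abelianization_of_fg {G : Type*} [Group G] [Group.FG G]
    (h : IsMulTorsion (Abelianization G)) : Finite (Abelianization G) :=
  have : Group.FG (Abelianization G) :=
    Group.fg_of_surjective (f := Abelianization.of) (QuotientGroup.mk'_surjective _)
  CommGroup.finite_of_fg_isMulTorsion _ h

theorem eq_one_of_isMulTorsion_abelianization {G A : Type*} [Group G] [CommGroup A]
    [IsMulTorsionFree A] (h : IsMulTorsion (Abelianization G)) (f : G →* A) : f = 1 := by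
  ext x
  have hx := (Abelianization.lift f).isOfFinOrder (h (Abelianization.of x))
  rw [Abelianization.lift_apply_of] at hx
  exact hx.eq_one'

end HilbertModular

theorem stmt_0_general (F : Type*) [Field F] [NumberField F] (h_rank : Units.rank F ≠ 0)
    (Γ : Subgroup (SpecialLinearGroup (Fin 2) (𝓞 F))) [Γ.FiniteIndex] :
    Finite (Abelianization Γ) ∧ ∀ f : Γ →* Multiplicative ℚ, f = 1 := by
  obtain ⟨u, hu⟩ := HilbertModular.exists_not_isOfFinOrder_of_rank_ne_zero h_rank
  have htorsion : IsMulTorsion (Abelianization Γ) := HilbertModular.isMulTorsion_abelianization hu Γ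
  have : Group.FG (SpecialLinearGroup (Fin 2) (𝓞 F)) := HilbertModular.SL2_fg F
  have : Group.FG Γ := Subgroup.fg_of_index_ne_zero Γ
  exact ⟨HilbertModular.finite_abelianization_of_fg htorsion,
    HilbertModular.eq_one_of_isMulTorsion_abelianization htorsion⟩

/-- **Theorem 2.2.2 (group-cohomological form).** If `F` is a totally real number field
of degree at least `2` and `Γ` is a finite-index subgroup of `SL₂(𝓞_F)`, then the
abelianization of `Γ` is finite; in particular every group homomorphism from `Γ` to
`(ℚ, +)` is trivial, i.e. `H¹(Γ, ℚ)` with trivial action vanishes. -/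
theorem stmt_0 (F : Type*) [Field F] [NumberField F]
    (h_totally_real : ∀ φ : F →+* ℂ, ∀ x : F, ∃ r : ℝ, φ x = (r : ℂ))
    (h_deg : 2 ≤ Module.finrank ℚ F)
    (Γ : Subgroup (Matrix.SpecialLinearGroup (Fin 2) (𝓞 F)))
    (hΓ : Γ.FiniteIndex) :
    Finite (Abelianization Γ) ∧ ∀ f : Γ →* Multiplicative ℚ, f = 1 := by
  have := HilbertModular.isTotallyReal_of_forall_exists_eq_ofReal h_totally_real
  exact stmt_0_general F (HilbertModular.rank_ne_zero_of_isTotallyReal h_deg) Γ
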